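/- arXiv:2104.14530 — 2 statements merged into one kernel-verified Lean document; each statement's English description precedes it below -/
import Mathlib

section
/- Let P : P₂^{sym}(2n) → P₂(2n) be the map sending each pair (i,j) of π ∈ P₂^{sym}(2n) to the pair (|i|,|j|). Then for every pair partition π ∈ P₂(2n): the fiber P⁻¹(π) has exactly 2ⁿ elements; every σ ∈ P⁻¹(π) has the same number of cycles, equal to c(π); and Σ_{σ ∈ P⁻¹(π)} q₋^{c₋(σ)} q₊^{l_c(σ)} = (1+q₋)^{c(π)} (2q₊)^{n−c(π)}. -/
noncomputable section

namespace TypeB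

/-! ### Symmetric pair partitions of [±2n] and their cycles -/

/-- Negation of a set of integers. -/
def negSet (B : Set ℤ) : Set ℤ := (fun x : ℤ => -x) '' B

/-- The set [±m] = {−m,…,−1,1,…,m} ⊆ ℤ. -/
def pmSet (m : ℕ) : Set ℤ := {i | i ≠ 0 ∧ |i| ≤ (m : ℤ)}

/-- π is a set partition of S. -/
def IsPartitionOn (S : Set ℤ) (π : Set (Set ℤ)) : Prop :=
  (∀ B ∈ π, B ⊆ S ∧ B.Nonempty) ∧ (∀ x ∈ S, ∃! B, B ∈ π ∧ x ∈ B)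

def IsPairB (B : Set ℤ) : Prop := ∃ a b : ℤ, a ≠ b ∧ B = {a, b}

def IsSingleB (B : Set ℤ) : Prop := ∃ a : ℤ, B = {a}

/-- P₂^{sym}(2n): partitions of [±2n] into pairs, invariant under negation, with no
pair equal to its own negation. -/
def P2sym (n : ℕ) (π : Set (Set ℤ)) : Prop :=
  IsPartitionOn (pmSet (2 * n)) π ∧ (∀ B ∈ π, IsPairB B) ∧
  (∀ B ∈ π, negSet B ∈ π) ∧ (∀ B ∈ π, negSet B ≠ B)

/-- Noncrossing partitions: no i < j < k < l with i,k in one block and j,l in another. -/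
def NonCrossing (π : Set (Set ℤ)) : Prop :=
  ¬ ∃ (i j k l : ℤ) (B C : Set ℤ), B ∈ π ∧ C ∈ π ∧ B ≠ C ∧
    i < j ∧ j < k ∧ k < l ∧ i ∈ B ∧ k ∈ B ∧ j ∈ C ∧ l ∈ C

/-- Right legs of positive pairs. -/
def posRightLegs (π : Set (Set ℤ)) : Set ℤ :=
  {b | ∃ a : ℤ, a < b ∧ ({a, b} : Set ℤ) ∈ π ∧ -a < b}

/-- Left legs of negative pairs. -/
def negLeftLegs (π : Set (Set ℤ)) : Set ℤ :=
  {a | ∃ b : ℤ, a < b ∧ ({a, b} : Set ℤ) ∈ π ∧ ¬(-a < b)}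

/-- Pairs of ρ do not cover singletons of ρ. -/
def NoCoveredSingleton (ρ : Set (Set ℤ)) : Prop :=
  ¬ ∃ a b c : ℤ, a < c ∧ c < b ∧ ({a, b} : Set ℤ) ∈ ρ ∧ ({c} : Set ℤ) ∈ ρ

/-- The defining properties of the noncrossing partition π̂ of [±m] associated with π:
a partition into pairs and singletons, noncrossing, symmetric, with every block inside
{1,…,m} or {−m,…,−1}, having the same right legs of positive pairs and the same left
legs of negative pairs as π, and whose pairs do not cover singletons. -/
def HatProps (m : ℕ) (π ρ : Set (Set ℤ)) : Prop :=
  IsPartitionOn (pmSet m) ρ ∧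
  (∀ B ∈ ρ, IsPairB B ∨ IsSingleB B) ∧
  NonCrossing ρ ∧
  (∀ B ∈ ρ, negSet B ∈ ρ) ∧
  (∀ B ∈ ρ, (∀ x ∈ B, 0 < x) ∨ (∀ x ∈ B, x < 0)) ∧
  posRightLegs ρ = posRightLegs π ∧
  negLeftLegs ρ = negLeftLegs π ∧
  NoCoveredSingleton ρ

open Classical in
/-- The partition π̂ associated with π (it exists and is unique). -/
def hatOf (m : ℕ) (π : Set (Set ℤ)) : Set (Set ℤ) :=
  if h : ∃ ρ, HatProps m π ρ then h.choose else ∅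

/-- Two pairs A,B of π are connected when some block C of ρ = π̂ meets both. -/
def connStep (π ρ : Set (Set ℤ)) (A B : Set ℤ) : Prop :=
  A ∈ π ∧ B ∈ π ∧ ∃ C ∈ ρ, (A ∩ C).Nonempty ∧ (B ∩ C).Nonempty

/-- The cycle (connected component) of pairs of π through A. -/
def compOf (π ρ : Set (Set ℤ)) (A : Set ℤ) : Set (Set ℤ) :=
  {B | Relation.ReflTransGen (connStep π ρ) A B}

/-- The set of all cycles (connected components of pairs). -/
def CompsOf (π ρ : Set (Set ℤ)) : Set (Set (Set ℤ)) :=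
  {K | ∃ A ∈ π, K = compOf π ρ A}

/-- A component is negative when its support is invariant under negation. -/
def NegComp (K : Set (Set ℤ)) : Prop := negSet (⋃₀ K) = ⋃₀ K

/-- c₋(π): the number of negative cycles of π ∈ P₂^{sym}(2n). -/
def cNeg (n : ℕ) (π : Set (Set ℤ)) : ℕ :=
  {K ∈ CompsOf π (hatOf (2 * n) π) | NegComp K}.ncard

/-- c(π): the number of cycles of π ∈ P₂^{sym}(2n); positive cycles come in mirror
pairs, each mirror pair counted once. -/
def cCount (n : ℕ) (π : Set (Set ℤ)) : ℕ :=
  cNeg n π + {K ∈ CompsOf π (hatOf (2 * n) π) | ¬NegComp K}.ncard / 2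



/-- The set {1,…,m} ⊆ ℤ. -/
def posInterval (m : ℕ) : Set ℤ := {i | 1 ≤ i ∧ i ≤ (m : ℤ)}

/-- P₂(m): pair partitions (perfect matchings) of {1,…,m}. -/
def P2on (m : ℕ) (π : Set (Set ℤ)) : Prop :=
  IsPartitionOn (posInterval m) π ∧ ∀ B ∈ π, IsPairB B

/-- The set of left legs of a partition into pairs. -/
def leftLegs (π : Set (Set ℤ)) : Set ℤ :=
  {a | ∃ b : ℤ, a < b ∧ ({a, b} : Set ℤ) ∈ π}

/-- The defining properties of the unique noncrossing pair partition π̂ of {1,…,m} with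
the same set of left legs as π. -/
def Hat2Props (m : ℕ) (π ρ : Set (Set ℤ)) : Prop :=
  P2on m ρ ∧ NonCrossing ρ ∧ leftLegs ρ = leftLegs π

open Classical in
/-- The noncrossing pair partition π̂ of {1,…,m} with the same left legs as π. -/
def hat2Of (m : ℕ) (π : Set (Set ℤ)) : Set (Set ℤ) :=
  if h : ∃ ρ, Hat2Props m π ρ then h.choose else ∅

/-- c(π) for π ∈ P₂(m): the number of cycles (connected components) of the union of π
with π̂, viewed as a 2-regular multigraph (components counted through the pairs of π). -/
def c2Count (m : ℕ) (π : Set (Set ℤ)) : ℕ :=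
  (CompsOf π (hat2Of m π)).ncard

/-- The projection P : P₂^{sym}(2n) → P₂(2n) sending each pair (i,j) to (|i|,|j|). -/
def Pmap (σ : Set (Set ℤ)) : Set (Set ℤ) :=
  {C | ∃ B ∈ σ, C = (fun x : ℤ => |x|) '' B}


lemma sum_left_legs {V R : Type*} [Fintype V] [LinearOrder V] [AddCommMonoid R] (f : V → V)
    (hf : ∀ x, f (f x) = x) (hne : ∀ x, f x ≠ x) (g : V → R) :
    ∑ x : {x // x < f x}, (g x + g (f x)) = ∑ x, g x := by
  classical
  rw [← Finset.sum_filter_add_sum_filter_not Finset.univ (fun x => x < f x) g,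
    Finset.sum_add_distrib]
  congr 1
  · rw [← Finset.sum_subtype]; simp
  · have : ∑ x : {x // x < f x}, g (f x) = ∑ x with x < f x, g (f x) := by
      symm
      apply Finset.sum_subtype (f := fun x => g (f x)); simp
    rw [this]
    refine Finset.sum_nbij' f f ?_ ?_ ?_ ?_ ?_
    · intro x hx; simp only [Finset.mem_filter, Finset.mem_univ, true_and] at hx ⊢
      rw [hf]; exact not_lt.2 hx.le
    · intro x hx; simp only [Finset.mem_filter, Finset.mem_univ, true_and] at hx ⊢
      rw [hf]; exact lt_of_le_of_ne (not_lt.1 hx) (hne x)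
    · intro x _; exact hf x
    · intro x _; exact hf x
    · intro x _; rfl

lemma card_left_legs {V : Type*} [Fintype V] [LinearOrder V] (f : V → V)
    (hf : ∀ x, f (f x) = x) (hne : ∀ x, f x ≠ x) :
    2 * Fintype.card {x // x < f x} = Fintype.card V := by
  have := sum_left_legs f hf hne (fun _ => (1 : ℕ))
  simp at this
  omega

lemma zmod2_add_self (a : ZMod 2) : a + a = 0 := CharTwo.add_self_eq_zero a

/-- The coboundary map. -/
def cob {V : Type*} [LinearOrder V] (f h : V → V) :
    (V → ZMod 2) →ₗ[ZMod 2] ({x // x < f x} → ZMod 2) × ({x // x < h x} → ZMod 2) where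
  toFun s := (fun x => s x + s (f x), fun x => s x + s (h x))
  map_add' s t := by
    ext x
    · simp; ring
    · simp; ring
  map_smul' a s := by
    ext x
    · simp; ring
    · simp; ring

open Classical in
/-- Total sign on every component. -/
def tot {V C : Type*} [Fintype V] [LinearOrder V] (f h : V → V) (c : V → C) :
    ({x // x < f x} → ZMod 2) × ({x // x < h x} → ZMod 2) →ₗ[ZMod 2] (C → ZMod 2) where
  toFun p k := (∑ x : {x // x < f x}, if c x = k then p.1 x else 0) +
    (∑ x : {x // x < h x}, if c x = k then p.2 x else 0)
  map_add' s t := by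
    ext k
    simp only [Prod.fst_add, Prod.snd_add, Pi.add_apply, ← Finset.sum_filter,
      Finset.sum_add_distrib]
    ring
  map_smul' a s := by
    ext k
    simp only [Prod.smul_fst, Prod.smul_snd, Pi.smul_apply, ← Finset.sum_filter, smul_eq_mul,
      ← Finset.mul_sum, RingHom.id_apply]
    ring

/-- Existence of a section over the component `k`. -/
def Sec {V C : Type*} [LinearOrder V] (f h : V → V) (c : V → C) (e : {x // x < f x} → ZMod 2)
    (k : C) : Prop :=
  ∃ s : V → ZMod 2, (∀ x : {x // x < f x}, c x = k → s x + s (f x) = e x) ∧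
    ∀ x : {x // x < h x}, c x = k → s x + s (h x) = 0

section main
variable {V C : Type*} [Fintype V] [LinearOrder V] [Fintype C] (f h : V → V) (c : V → C)

lemma tot_cob_apply (hf : ∀ x, f (f x) = x) (hfn : ∀ x, f x ≠ x)
    (hh : ∀ x, h (h x) = x) (hhn : ∀ x, h x ≠ x)
    (hcf : ∀ x, c (f x) = c x) (hch : ∀ x, c (h x) = c x) (s : V → ZMod 2) :
    tot f h c (cob f h s) = 0 := by
  classical
  ext k
  have e1 := sum_left_legs f hf hfn (fun x => if c x = k then s x else 0)
  have e2 := sum_left_legs h hh hhn (fun x => if c x = k then s x else 0)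
  simp only [hcf] at e1
  simp only [hch] at e2
  have e3 : tot f h c (cob f h s) k =
     (∑ x : {x // x < f x}, ((if c x = k then s x else 0) + (if c x = k then s (f x) else 0))) +
     (∑ x : {x // x < h x}, ((if c x = k then s x else 0) + (if c x = k then s (h x) else 0))) := by
    simp only [tot, cob, LinearMap.coe_mk, AddHom.coe_mk]
    congr 1
    · apply Finset.sum_congr rfl
      intro x _
      split_ifs <;> simp
    · apply Finset.sum_congr rfl
      intro x _
      split_ifs <;> simp
  rw [e3, e1, e2, zmod2_add_self]
  rfl

lemma tot_surj (hf : ∀ x, f (f x) = x) (hfn : ∀ x, f x ≠ x)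
    (hcf : ∀ x, c (f x) = c x) (hc : Function.Surjective c) (t : C → ZMod 2) :
    ∃ e, tot f h c (e, 0) = t := by
  classical
  have key : ∀ k, ∃ x : {x // x < f x}, c x = k := by
    intro k
    obtain ⟨x, rfl⟩ := hc k
    rcases lt_or_gt_of_ne (hfn x) with h1 | h1
    · exact ⟨⟨f x, by rw [hf]; exact h1⟩, hcf x⟩
    · exact ⟨⟨x, h1⟩, rfl⟩
  choose r hr using key
  refine ⟨fun x => if x = r (c x) then t (c x) else 0, ?_⟩
  ext k
  simp only [tot, LinearMap.coe_mk, AddHom.coe_mk, Pi.zero_apply, ite_self,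
    Finset.sum_const_zero, add_zero]
  rw [Finset.sum_eq_single (r k)]
  · simp [hr]
  · intro x _ hx
    split_ifs with h1 h2
    · rw [h1] at h2; exact absurd h2 hx
    · rfl
    · rfl
  · simp

lemma ker_tot (hf : ∀ x, f (f x) = x) (hfn : ∀ x, f x ≠ x)
    (hh : ∀ x, h (h x) = x) (hhn : ∀ x, h x ≠ x)
    (hcf : ∀ x, c (f x) = c x) (hch : ∀ x, c (h x) = c x) (hc : Function.Surjective c)
    (hconst : ∀ s : V → ZMod 2, (∀ x, s (f x) = s x) → (∀ x, s (h x) = s x) →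
      ∀ x y, c x = c y → s x = s y) :
    LinearMap.range (cob f h) = LinearMap.ker (tot f h c) := by
  classical
  apply Submodule.eq_of_le_of_finrank_le
  · rintro _ ⟨s, rfl⟩
    exact tot_cob_apply f h c hf hfn hh hhn hcf hch s
  · have r1 := LinearMap.finrank_range_add_finrank_ker (cob f h)
    have r2 := LinearMap.finrank_range_add_finrank_ker (tot f h c)
    have r3 : LinearMap.range (tot f h c) = ⊤ := by
      rw [LinearMap.range_eq_top]
      intro t
      obtain ⟨e, he⟩ := tot_surj f h c hf hfn hcf hc t
      exact ⟨_, he⟩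
    rw [r3, finrank_top] at r2
    simp only [Module.finrank_prod, Module.finrank_fintype_fun_eq_card] at r1 r2
    have c1 := card_left_legs f hf hfn
    have c2 := card_left_legs h hh hhn
    choose r hr using hc
    have kerprop : ∀ s : LinearMap.ker (cob f h), ∀ x y, c x = c y → s.1 x = s.1 y := by
      rintro ⟨s, hs⟩
      rw [LinearMap.mem_ker] at hs
      have hs1 : ∀ x : {x // x < f x}, s x + s (f x) = 0 := fun x => congrFun (congrArg Prod.fst hs) x
      have hs2 : ∀ x : {x // x < h x}, s x + s (h x) = 0 := fun x => congrFun (congrArg Prod.snd hs) x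
      apply hconst s
      · intro x
        rcases lt_or_gt_of_ne (hfn x) with h1 | h1
        · have := hs1 ⟨f x, by rw [hf]; exact h1⟩
          simp only [hf] at this
          exact CharTwo.add_eq_zero.1 this
        · exact (CharTwo.add_eq_zero.1 (hs1 ⟨x, h1⟩)).symm
      · intro x
        rcases lt_or_gt_of_ne (hhn x) with h1 | h1
        · have := hs2 ⟨h x, by rw [hh]; exact h1⟩
          simp only [hh] at this
          exact CharTwo.add_eq_zero.1 this
        · exact (CharTwo.add_eq_zero.1 (hs2 ⟨x, h1⟩)).symm
    let φ : LinearMap.ker (cob f h) →ₗ[ZMod 2] (C → ZMod 2) :=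
      { toFun := fun s k => s.1 (r k)
        map_add' := fun s t => rfl
        map_smul' := fun a t => rfl }
    have hinj : Function.Injective φ := by
      intro s t hst
      ext x
      have h1 : s.1 (r (c x)) = t.1 (r (c x)) := congrFun hst (c x)
      rw [kerprop s x (r (c x)) (hr _).symm, kerprop t x (r (c x)) (hr _).symm, h1]
    have := LinearMap.finrank_le_finrank_of_injective hinj
    rw [Module.finrank_fintype_fun_eq_card] at this
    omega

lemma sec_iff (hf : ∀ x, f (f x) = x) (hfn : ∀ x, f x ≠ x)
    (hh : ∀ x, h (h x) = x) (hhn : ∀ x, h x ≠ x)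
    (hcf : ∀ x, c (f x) = c x) (hch : ∀ x, c (h x) = c x) (hc : Function.Surjective c)
    (hconst : ∀ s : V → ZMod 2, (∀ x, s (f x) = s x) → (∀ x, s (h x) = s x) →
      ∀ x y, c x = c y → s x = s y) (e : {x // x < f x} → ZMod 2) (k : C) :
    Sec f h c e k ↔ tot f h c (e, 0) k = 0 := by
  classical
  constructor
  · rintro ⟨s, h1, h2⟩
    rw [← Pi.zero_apply (M := fun _ => ZMod 2) k,
      ← tot_cob_apply f h c hf hfn hh hhn hcf hch s]
    simp only [tot, cob, LinearMap.coe_mk, AddHom.coe_mk]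
    congr 1
    · apply Finset.sum_congr rfl
      intro x _
      split_ifs with hx
      · exact (h1 x hx).symm
      · rfl
    · apply Finset.sum_congr rfl
      intro x _
      split_ifs with hx
      · exact (h2 x hx).symm
      · rfl
  · intro hk
    have hmem : ((fun x => if c x = k then e x else 0, 0) :
        ({x // x < f x} → ZMod 2) × ({x // x < h x} → ZMod 2)) ∈ LinearMap.ker (tot f h c) := by
      rw [LinearMap.mem_ker]
      ext l
      by_cases hl : l = k
      · subst hl
        refine Eq.trans ?_ hk
        simp only [tot, LinearMap.coe_mk, AddHom.coe_mk]
        congr 1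
        apply Finset.sum_congr rfl
        intro x _
        split_ifs <;> rfl
      · simp only [tot, LinearMap.coe_mk, AddHom.coe_mk, Pi.zero_apply, ite_self,
          Finset.sum_const_zero, add_zero]
        apply Finset.sum_eq_zero
        intro x _
        split_ifs with h1 h2
        · exact absurd (h1.symm.trans h2) hl
        · rfl
        · rfl
    rw [← ker_tot f h c hf hfn hh hhn hcf hch hc hconst] at hmem
    obtain ⟨s, hs⟩ := hmem
    refine ⟨s, ?_, ?_⟩
    · intro x hx
      have : s x + s (f x) = if c x = k then e x else 0 := congrFun (congrArg Prod.fst hs) x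
      rw [this, if_pos hx]
    · intro x hx
      exact congrFun (congrArg Prod.snd hs) x

open Classical in
lemma sum_sec (hf : ∀ x, f (f x) = x) (hfn : ∀ x, f x ≠ x)
    (hh : ∀ x, h (h x) = x) (hhn : ∀ x, h x ≠ x)
    (hcf : ∀ x, c (f x) = c x) (hch : ∀ x, c (h x) = c x) (hc : Function.Surjective c)
    (hconst : ∀ s : V → ZMod 2, (∀ x, s (f x) = s x) → (∀ x, s (h x) = s x) →
      ∀ x y, c x = c y → s x = s y) (n : ℕ) (hn : Fintype.card V = 2 * n) (q : ℂ) :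
    Fintype.card C ≤ n ∧
    ∑ e : {x // x < f x} → ZMod 2, q ^ (Finset.univ.filter fun k => ¬ Sec f h c e k).card =
      2 ^ (n - Fintype.card C) * (1 + q) ^ (Fintype.card C) := by
  have c1 := card_left_legs f hf hfn
  let N : ({x // x < f x} → ZMod 2) →ₗ[ZMod 2] (C → ZMod 2) :=
    (tot f h c) ∘ₗ LinearMap.inl (ZMod 2) _ _
  have hN : ∀ e, N e = tot f h c (e, 0) := fun e => rfl
  have hNs : Function.Surjective N := tot_surj f h c hf hfn hcf hc
  have hr := LinearMap.finrank_range_add_finrank_ker N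
  rw [LinearMap.range_eq_top.2 hNs, finrank_top] at hr
  simp only [Module.finrank_fintype_fun_eq_card] at hr
  refine ⟨by omega, ?_⟩
  have hker : Fintype.card (LinearMap.ker N) = 2 ^ (n - Fintype.card C) := by
    rw [Module.card_eq_pow_finrank (K := ZMod 2), ZMod.card]
    congr 1
    omega
  have hfib : ∀ t, (Finset.univ.filter fun e => N e = t).card = 2 ^ (n - Fintype.card C) := by
    intro t
    obtain ⟨e₀, rfl⟩ := hNs t
    rw [← hker, ← Fintype.card_coe]
    apply Fintype.card_congr
    refine ⟨fun e => ⟨e.1 - e₀, ?_⟩, fun d => ⟨d.1 + e₀, ?_⟩, ?_, ?_⟩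
    · have := e.2
      simp only [Finset.mem_filter, Finset.mem_univ, true_and] at this
      rw [LinearMap.mem_ker, map_sub, this, sub_self]
    · have := d.2
      rw [LinearMap.mem_ker] at this
      simp [this]
    · intro e; simp
    · intro e; simp
  simp only [sec_iff f h c hf hfn hh hhn hcf hch hc hconst, ← hN]
  rw [← Finset.sum_fiberwise (s := Finset.univ) (g := fun e => N e)]
  have : ∀ t : C → ZMod 2, ∑ e with N e = t, q ^ (Finset.univ.filter fun k => ¬ N e k = 0).card
      = 2 ^ (n - Fintype.card C) * q ^ (Finset.univ.filter fun k => ¬ t k = 0).card := by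
    intro t
    rw [Finset.sum_congr rfl (g := fun _ => q ^ (Finset.univ.filter fun k => ¬ t k = 0).card)]
    · rw [Finset.sum_const, hfib]; simp
    · intro e he
      simp only [Finset.mem_filter, Finset.mem_univ, true_and] at he
      rw [he]
  simp only [this]
  rw [← Finset.mul_sum]
  congr 1
  have h3 : ∀ t : C → ZMod 2, q ^ (Finset.univ.filter fun k => ¬ t k = 0).card =
      ∏ k, if t k = 0 then 1 else q := by
    intro t
    rw [Finset.prod_ite]; simp
  simp only [h3]
  have h4 := (Finset.prod_univ_sum (fun _ : C => (Finset.univ : Finset (ZMod 2)))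
    (fun _ a => if a = 0 then (1 : ℂ) else q)).symm
  rw [Fintype.piFinset_univ] at h4
  rw [h4, Finset.prod_const, Finset.card_univ]
  congr 1
  change ∑ x : Fin 2, _ = _
  rw [Fin.sum_univ_two]
  rfl

end main

/-- The blocks `{x, F x}` for `x ∈ S`. -/
def pairsOf (S : Set ℤ) (F : ℤ → ℤ) : Set (Set ℤ) := {B | ∃ x ∈ S, B = {x, F x}}

/-- `F` restricts to a fixed-point free involution of `S`. -/
structure Inv (S : Set ℤ) (F : ℤ → ℤ) : Prop where
  mem : ∀ x ∈ S, F x ∈ S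
  invol : ∀ x ∈ S, F (F x) = x
  ne : ∀ x ∈ S, F x ≠ x

lemma pair_eq_iff {a b c d : ℤ} : ({a, b} : Set ℤ) = {c, d} ↔ (a = c ∧ b = d) ∨ (a = d ∧ b = c) := by
  exact Set.pair_eq_pair_iff

lemma Inv.pair_mem_iff {S : Set ℤ} {F : ℤ → ℤ} (hI : Inv S F) {a b : ℤ} :
    ({a, b} : Set ℤ) ∈ pairsOf S F ↔ a ∈ S ∧ b = F a := by
  constructor
  · rintro ⟨x, hx, h⟩
    rcases pair_eq_iff.1 h with ⟨rfl, rfl⟩ | ⟨rfl, rfl⟩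
    · exact ⟨hx, rfl⟩
    · exact ⟨hI.mem _ hx, (hI.invol _ hx).symm⟩
  · rintro ⟨h, rfl⟩
    exact ⟨a, h, rfl⟩

lemma Inv.block_eq {S : Set ℤ} {F : ℤ → ℤ} (hI : Inv S F) {B : Set ℤ} (hB : B ∈ pairsOf S F)
    {x : ℤ} (hx : x ∈ B) : x ∈ S ∧ B = {x, F x} := by
  obtain ⟨y, hy, rfl⟩ := hB
  rcases hx with rfl | rfl
  · exact ⟨hy, rfl⟩
  · refine ⟨hI.mem _ hy, ?_⟩
    rw [hI.invol _ hy, Set.pair_comm]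

lemma Inv.partition {S : Set ℤ} {F : ℤ → ℤ} (hI : Inv S F) : IsPartitionOn S (pairsOf S F) := by
  constructor
  · intro B hB
    refine ⟨fun x hx => (hI.block_eq hB hx).1, ?_⟩
    obtain ⟨y, hy, rfl⟩ := hB
    exact ⟨y, Or.inl rfl⟩
  · intro x hx
    refine ⟨{x, F x}, ⟨⟨x, hx, rfl⟩, Or.inl rfl⟩, ?_⟩
    rintro B ⟨hB, hxB⟩
    exact (hI.block_eq hB hxB).2

lemma Inv.isPair {S : Set ℤ} {F : ℤ → ℤ} (hI : Inv S F) : ∀ B ∈ pairsOf S F, IsPairB B := by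
  rintro B ⟨x, hx, rfl⟩
  exact ⟨x, F x, (hI.ne x hx).symm, rfl⟩

lemma block_unique {S : Set ℤ} {ρ : Set (Set ℤ)} (h : IsPartitionOn S ρ) {B C : Set ℤ}
    (hB : B ∈ ρ) (hC : C ∈ ρ) {x : ℤ} (hxB : x ∈ B) (hxC : x ∈ C) : B = C :=
  (h.2 x ((h.1 B hB).1 hxB)).unique ⟨hB, hxB⟩ ⟨hC, hxC⟩

lemma eq_pairsOf {S : Set ℤ} {ρ : Set (Set ℤ)} (h : IsPartitionOn S ρ) {F : ℤ → ℤ}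
    (hF : ∀ x ∈ S, ({x, F x} : Set ℤ) ∈ ρ) : ρ = pairsOf S F := by
  ext B
  constructor
  · intro hB
    obtain ⟨x, hx⟩ := (h.1 B hB).2
    have hxS := (h.1 B hB).1 hx
    exact ⟨x, hxS, block_unique h hB (hF x hxS) hx (Or.inl rfl)⟩
  · rintro ⟨x, hx, rfl⟩
    exact hF x hx

lemma exists_inv {S : Set ℤ} {ρ : Set (Set ℤ)} (h : IsPartitionOn S ρ)
    (hp : ∀ B ∈ ρ, IsPairB B) : ∃ F, Inv S F ∧ ρ = pairsOf S F := by
  have key : ∀ x : ℤ, ∃ y, x ∈ S → x ≠ y ∧ ({x, y} : Set ℤ) ∈ ρ := by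
    intro x
    by_cases hx : x ∈ S
    · obtain ⟨B, ⟨hB, hxB⟩, -⟩ := h.2 x hx
      obtain ⟨a, b, hab, rfl⟩ := hp B hB
      rcases hxB with rfl | rfl
      · exact ⟨b, fun _ => ⟨hab, hB⟩⟩
      · exact ⟨a, fun _ => ⟨hab.symm, by rwa [Set.pair_comm]⟩⟩
    · exact ⟨0, fun h => absurd h hx⟩
  choose F hF using key
  have hmem : ∀ x ∈ S, F x ∈ S := fun x hx => (h.1 _ (hF x hx).2).1 (Or.inr rfl)
  refine ⟨F, ⟨hmem, ?_, fun x hx => (hF x hx).1.symm⟩, eq_pairsOf h fun x hx => (hF x hx).2⟩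
  intro x hx
  have := block_unique h (hF x hx).2 (hF _ (hmem x hx)).2 (x := F x) (Or.inr rfl) (Or.inl rfl)
  rcases pair_eq_iff.1 this with ⟨h1, h2⟩ | ⟨h1, h2⟩
  · exact absurd h1 (hF x hx).1
  · exact h1.symm

/-- Noncrossing involutions. -/
def NC (S : Set ℤ) (h : ℤ → ℤ) : Prop :=
  ∀ i ∈ S, ∀ j ∈ S, i < j → j < h i → h i < h j → False

lemma mem_posInterval {m : ℕ} {x : ℤ} : x ∈ posInterval m ↔ 1 ≤ x ∧ x ≤ (m : ℤ) := Iff.rfl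

lemma exists_nc_aux (m : ℕ) : ∀ (k : ℕ) (f : ℤ → ℤ), Inv (posInterval m) f →
    (∑ x ∈ Finset.Icc (1 : ℤ) m, x * f x) = k →
    ∃ h, Inv (posInterval m) h ∧ NC (posInterval m) h ∧
      ∀ x ∈ posInterval m, (x < h x ↔ x < f x) := by
  intro k
  induction k using Nat.strong_induction_on with
  | _ k ih =>
  intro f hf hk
  by_cases hnc : NC (posInterval m) f
  · exact ⟨f, hf, hnc, fun _ _ => Iff.rfl⟩
  simp only [NC, not_forall] at hnc
  obtain ⟨i, hi, j, hj, hij, hjk, hkl, -⟩ := hnc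
  obtain ⟨g, hg⟩ : ∃ g : ℤ → ℤ, g = fun x => if x = i then f j else if x = j then f i
    else if x = f i then j else if x = f j then i else f x := ⟨_, rfl⟩
  have hfi := hf.mem i hi
  have hfj := hf.mem j hj
  have e1 := hf.invol i hi
  have e2 := hf.invol j hj
  have hgI : Inv (posInterval m) g := by
    refine ⟨?_, ?_, ?_⟩
    · intro x hx
      have := hf.mem x hx
      rw [hg]; dsimp only; split_ifs <;> assumption
    · intro x hx
      have := hf.invol x hx
      rw [hg]; grind
    · intro x hx
      have := hf.ne x hx
      rw [hg]; grind
  have hgl : ∀ x ∈ posInterval m, (x < g x ↔ x < f x) := by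
    intro x hx
    rw [hg]; grind
  have hsum : (∑ x ∈ Finset.Icc (1 : ℤ) m, (x * g x - x * f x)) = 2 * ((i - j) * (f j - f i)) := by
    rw [← Finset.sum_subset (s₁ := {i, j, f i, f j})]
    · rw [Finset.sum_insert, Finset.sum_insert, Finset.sum_insert, Finset.sum_singleton]
      · have g1 : g i = f j := by rw [hg]; grind
        have g2 : g j = f i := by rw [hg]; grind
        have g3 : g (f i) = j := by rw [hg]; grind
        have g4 : g (f j) = i := by rw [hg]; grind
        rw [g1, g2, g3, g4, e1, e2]; ring
      all_goals simp; try omega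
    · intro x hx
      simp only [Finset.mem_insert, Finset.mem_singleton] at hx
      rw [Finset.mem_Icc]
      rcases hx with rfl | rfl | rfl | rfl <;> assumption
    · intro x _ hx
      simp only [Finset.mem_insert, Finset.mem_singleton, not_or] at hx
      rw [hg]; simp [hx]
  rw [Finset.sum_sub_distrib, hk] at hsum
  have hnn : 0 ≤ ∑ x ∈ Finset.Icc (1 : ℤ) m, x * g x := by
    apply Finset.sum_nonneg
    intro x hx
    rw [Finset.mem_Icc] at hx
    have := (hgI.mem x hx).1
    nlinarith [hx.1]
  have hneg : (i - j) * (f j - f i) < 0 := mul_neg_of_neg_of_pos (by omega) (by omega)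
  obtain ⟨h, h1, h2, h3⟩ := ih (∑ x ∈ Finset.Icc (1 : ℤ) m, x * g x).toNat (by omega) g hgI
    (by omega)
  exact ⟨h, h1, h2, fun x hx => (h3 x hx).trans (hgl x hx)⟩

lemma exists_nc (m : ℕ) (f : ℤ → ℤ) (hf : Inv (posInterval m) f) :
    ∃ h, Inv (posInterval m) h ∧ NC (posInterval m) h ∧
      ∀ x ∈ posInterval m, (x < h x ↔ x < f x) := by
  have hnn : 0 ≤ ∑ x ∈ Finset.Icc (1 : ℤ) m, x * f x := by
    apply Finset.sum_nonneg
    intro x hx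
    rw [Finset.mem_Icc] at hx
    have := (hf.mem x hx).1
    nlinarith [hx.1]
  exact exists_nc_aux m (∑ x ∈ Finset.Icc (1 : ℤ) m, x * f x).toNat f hf (by omega)

/-- Right legs are matched as in `h`. -/
lemma hat_unique {V : Set ℤ} {h : ℤ → ℤ} (hh : Inv V h) (hnc : NC V h) (hpos : ∀ x ∈ V, 1 ≤ x)
    {ρ : Set (Set ℤ)} (hρ : NonCrossing ρ)
    (hdis : ∀ B ∈ ρ, ∀ C ∈ ρ, ∀ x, x ∈ B → x ∈ C → B = C)
    (h1 : ∀ b ∈ V, h b < b → ∃ a ∈ V, a < b ∧ ({a, b} : Set ℤ) ∈ ρ ∧ a < h a)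
    (h2 : ∀ a ∈ V, ∀ b ∈ V, ∀ c ∈ V, a < c → c < b → ({a, b} : Set ℤ) ∈ ρ → c < h c →
      ∃ d ∈ V, h d < d ∧ c < d ∧ ({c, d} : Set ℤ) ∈ ρ) :
    ∀ b ∈ V, h b < b → ({h b, b} : Set ℤ) ∈ ρ := by
  have main : ∀ k : ℕ, ∀ b ∈ V, b.toNat = k → h b < b → ({h b, b} : Set ℤ) ∈ ρ := by
    intro k
    induction k using Nat.strong_induction_on with
    | _ k ih =>
    intro b hb hbk hlt
    have ih' : ∀ c ∈ V, c < b → h c < c → ({h c, c} : Set ℤ) ∈ ρ := fun c hc hcb hlt' =>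
      ih c.toNat (by have := hpos c hc; have := hpos b hb; omega) c hc rfl hlt'
    obtain ⟨a, ha, hab, habρ, hla⟩ := h1 b hb hlt
    have ha'V := hh.mem b hb
    have hhb := hh.invol b hb
    rcases lt_trichotomy a (h b) with hlt1 | heq | hgt
    · exfalso
      obtain ⟨d, hd, hdl, hcd, hcdρ⟩ := h2 a ha b hb (h b) ha'V hlt1 hlt habρ (by rw [hhb]; exact hlt)
      have hne : d ≠ b := by
        rintro rfl
        have := hdis _ habρ _ hcdρ d (Or.inr rfl) (Or.inr rfl)
        rcases pair_eq_iff.1 this with ⟨h3, -⟩ | ⟨h3, -⟩ <;> omega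
      rcases lt_or_gt_of_ne hne with hdb | hdb
      · have h4 := ih' d hd hdb hdl
        have := hdis _ h4 _ hcdρ d (Or.inr rfl) (Or.inr rfl)
        rcases pair_eq_iff.1 this with ⟨h3, -⟩ | ⟨h3, -⟩
        · have := hh.invol d hd
          rw [h3, hhb] at this
          omega
        · omega
      · refine hρ ⟨a, h b, b, d, _, _, habρ, hcdρ, ?_, hlt1, hlt, hdb, Or.inl rfl, Or.inr rfl,
          Or.inl rfl, Or.inr rfl⟩
        intro h5
        rcases pair_eq_iff.1 h5 with ⟨h3, -⟩ | ⟨h3, -⟩ <;> omega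
    · rwa [← heq]
    · exfalso
      have hha := hh.invol a ha
      have hne : h a ≠ b := by
        intro h5; rw [h5] at hha; omega
      have hlt2 : h a < b := by
        rcases lt_or_gt_of_ne hne with h5 | h5
        · exact h5
        · exact (hnc (h b) ha'V a ha hgt (by rw [hhb]; exact hab) (by rw [hhb]; exact h5)).elim
      have h4 := ih' (h a) (hh.mem a ha) hlt2 (by rw [hha]; exact hla)
      rw [hha] at h4
      have := hdis _ h4 _ habρ a (Or.inl rfl) (Or.inl rfl)
      rcases pair_eq_iff.1 this with ⟨-, h3⟩ | ⟨h3, -⟩ <;> omega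
  exact fun b hb => main _ b hb rfl


/-- The signed lift of `f`. -/
def lift (f : ℤ → ℤ) (e : ℤ → ZMod 2) (x : ℤ) : ℤ :=
  if (0 < x ↔ e |x| = 0) then f |x| else - f |x|

lemma mem_pmSet {m : ℕ} {x : ℤ} : x ∈ pmSet m ↔ |x| ∈ posInterval m := by
  simp only [pmSet, posInterval, Set.mem_ofPred_eq]
  have := abs_pos (a := x)
  constructor
  · rintro ⟨h1, h2⟩; have := this.2 h1; omega
  · rintro ⟨h1, h2⟩; exact ⟨this.1 (by omega), h2⟩

lemma pos_mem_pmSet {m : ℕ} {x : ℤ} (hx : x ∈ posInterval m) : x ∈ pmSet m := by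
  rw [mem_pmSet, abs_of_pos (by have := hx.1; omega)]; exact hx

lemma neg_mem_pmSet {m : ℕ} {x : ℤ} : -x ∈ pmSet m ↔ x ∈ pmSet m := by
  rw [mem_pmSet, mem_pmSet, abs_neg]

lemma abs_lift {m : ℕ} {f : ℤ → ℤ} (hf : Inv (posInterval m) f) (e : ℤ → ZMod 2) {x : ℤ}
    (hx : x ∈ pmSet m) : |lift f e x| = f |x| := by
  have := (hf.mem _ (mem_pmSet.1 hx)).1
  unfold lift
  split_ifs
  · rw [abs_of_pos (by omega)]
  · rw [abs_neg, abs_of_pos (by omega)]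

lemma lift_pos_iff {m : ℕ} {f : ℤ → ℤ} (hf : Inv (posInterval m) f) (e : ℤ → ZMod 2) {x : ℤ}
    (hx : x ∈ pmSet m) : 0 < lift f e x ↔ (0 < x ↔ e |x| = 0) := by
  have := (hf.mem _ (mem_pmSet.1 hx)).1
  unfold lift
  split_ifs with h
  · simp only [h, iff_true]; omega
  · simp only [h, iff_false]; omega

lemma lift_neg (f : ℤ → ℤ) (e : ℤ → ZMod 2) {x : ℤ} (hx : x ≠ 0) :
    lift f e (-x) = - lift f e x := by
  unfold lift
  rw [abs_neg]
  have : 0 < -x ↔ ¬ 0 < x := by omega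
  simp only [this]
  split_ifs with h1 h2 h2
  · tauto
  · simp
  · simp
  · tauto

lemma eq_of_abs_of_pos {a b : ℤ} (hb : b ≠ 0) (h1 : |a| = |b|) (h2 : 0 < a ↔ 0 < b) : a = b := by
  rcases abs_eq_abs.1 h1 with h | h
  · exact h
  · omega

lemma Inv.lift {m : ℕ} {f : ℤ → ℤ} (hf : Inv (posInterval m) f) (e : ℤ → ZMod 2)
    (he : ∀ x ∈ posInterval m, e (f x) = e x) : Inv (pmSet m) (lift f e) := by
  have hmem : ∀ x ∈ pmSet m, TypeB.lift f e x ∈ pmSet m := by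
    intro x hx
    rw [mem_pmSet, abs_lift hf e hx]
    exact hf.mem _ (mem_pmSet.1 hx)
  refine ⟨hmem, ?_, ?_⟩
  · intro x hx
    apply eq_of_abs_of_pos hx.1
    · rw [abs_lift hf e (hmem x hx), abs_lift hf e hx, hf.invol _ (mem_pmSet.1 hx)]
    · rw [lift_pos_iff hf e (hmem x hx), abs_lift hf e hx, lift_pos_iff hf e hx,
        he _ (mem_pmSet.1 hx)]
      tauto
  · intro x hx h
    have := abs_lift hf e hx
    rw [h] at this
    exact hf.ne _ (mem_pmSet.1 hx) this.symm

lemma negSet_pair (a b : ℤ) : negSet {a, b} = {-a, -b} := by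
  simp [negSet, Set.image_pair]

lemma negSet_mem_lift {m : ℕ} {f : ℤ → ℤ} (e : ℤ → ZMod 2) :
    ∀ B ∈ pairsOf (pmSet m) (lift f e), negSet B ∈ pairsOf (pmSet m) (lift f e) := by
  rintro B ⟨x, hx, rfl⟩
  refine ⟨-x, neg_mem_pmSet.2 hx, ?_⟩
  rw [negSet_pair, lift_neg f e hx.1]

lemma posRightLegs_lift {m : ℕ} {f : ℤ → ℤ} (hf : Inv (posInterval m) f) (e : ℤ → ZMod 2)
    (he : ∀ x ∈ posInterval m, e (f x) = e x) :
    posRightLegs (pairsOf (pmSet m) (lift f e)) = {b | b ∈ posInterval m ∧ f b < b} := by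
  have hI := hf.lift e he
  ext b
  constructor
  · rintro ⟨a, hab, hp, hab'⟩
    rw [Set.pair_comm, hI.pair_mem_iff] at hp
    obtain ⟨hb, rfl⟩ := hp
    have hb0 : 0 < b := by omega
    have h1 := abs_lift hf e hb
    have h2 := mem_pmSet.1 hb
    rw [abs_of_pos hb0] at h1 h2
    refine ⟨h2, ?_⟩
    rw [← h1]
    exact abs_lt.2 ⟨by omega, hab⟩
  · rintro ⟨hb, hlt⟩
    have hb' := pos_mem_pmSet hb
    have h1 := abs_lift hf e hb'
    rw [abs_of_pos (show 0 < b by have := hb.1; omega)] at h1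
    rw [← h1, abs_lt] at hlt
    refine ⟨lift f e b, hlt.2, ?_, by omega⟩
    rw [Set.pair_comm, hI.pair_mem_iff]
    exact ⟨hb', rfl⟩

lemma negLeftLegs_lift {m : ℕ} {f : ℤ → ℤ} (hf : Inv (posInterval m) f) (e : ℤ → ZMod 2)
    (he : ∀ x ∈ posInterval m, e (f x) = e x) :
    negLeftLegs (pairsOf (pmSet m) (lift f e)) = {a | -a ∈ posInterval m ∧ f (-a) < -a} := by
  have hI := hf.lift e he
  ext a
  constructor
  · rintro ⟨b, hab, hp, hab'⟩
    rw [hI.pair_mem_iff] at hp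
    obtain ⟨ha, rfl⟩ := hp
    have ha0 : a < 0 := by omega
    have h1 := abs_lift hf e ha
    have h2 := mem_pmSet.1 ha
    rw [abs_of_neg ha0] at h1 h2
    refine ⟨h2, ?_⟩
    apply lt_of_le_of_ne _ (hf.ne _ h2)
    rw [← h1]
    exact abs_le.2 ⟨by omega, by omega⟩
  · rintro ⟨hb, hlt⟩
    have hb' := neg_mem_pmSet.1 (pos_mem_pmSet hb)
    have h1 := abs_lift hf e hb'
    rw [abs_of_neg (show a < 0 by have := hb.1; omega)] at h1
    rw [← h1, abs_lt] at hlt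
    refine ⟨lift f e a, by omega, ?_, by omega⟩
    rw [hI.pair_mem_iff]
    exact ⟨hb', rfl⟩

lemma lift_zero_of_pos {h : ℤ → ℤ} {x : ℤ} (hx : 0 < x) : lift h 0 x = h x := by
  simp [lift, hx, abs_of_pos hx]

lemma lift_zero_of_neg {h : ℤ → ℤ} {x : ℤ} (hx : x < 0) : lift h 0 x = - h (-x) := by
  simp [lift, hx.le, abs_of_neg hx]

lemma NC.nonCrossing {S : Set ℤ} {h : ℤ → ℤ} (hI : Inv S h) (hnc : NC S h) :
    NonCrossing (pairsOf S h) := by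
  rintro ⟨i, j, k, l, B, C, hB, hC, -, hij, hjk, hkl, hi, hk, hj, hl⟩
  obtain ⟨hiS, rfl⟩ := hI.block_eq hB hi
  obtain ⟨hjS, rfl⟩ := hI.block_eq hC hj
  rcases hk with rfl | rfl
  · omega
  rcases hl with rfl | rfl
  · omega
  exact hnc i hiS j hjS hij hjk hkl

lemma NC.lift {m : ℕ} {h : ℤ → ℤ} (hh : Inv (posInterval m) h) (hnc : NC (posInterval m) h) :
    NC (pmSet m) (lift h 0) := by
  intro i hi j hj hij hjk hkl
  have hi1 := mem_pmSet.1 hi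
  have hj1 := mem_pmSet.1 hj
  rcases lt_or_gt_of_ne hi.1 with h0 | h0
  · rw [abs_of_neg h0] at hi1
    rw [lift_zero_of_neg h0] at hjk hkl
    have h2 := (hh.mem _ hi1)
    have hj0 : j < 0 := by have := h2.1; omega
    rw [abs_of_neg hj0] at hj1
    rw [lift_zero_of_neg hj0] at hkl
    have h3 := hh.mem _ hj1
    have e1 := hh.invol _ hi1
    have e2 := hh.invol _ hj1
    exact hnc (h (-j)) h3 (h (-i)) h2 (by omega) (by omega) (by omega)
  · have hj0 : 0 < j := by omega
    rw [abs_of_pos h0] at hi1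
    rw [abs_of_pos hj0] at hj1
    rw [lift_zero_of_pos h0] at hjk hkl
    rw [lift_zero_of_pos hj0] at hkl
    exact hnc i hi1 j hj1 hij hjk hkl

lemma pos_mem_of_pm {m : ℕ} {x : ℤ} (hx : x ∈ pmSet m) (h : 0 < x) : x ∈ posInterval m := by
  have := mem_pmSet.1 hx
  rwa [abs_of_pos h] at this

lemma right_iff {m : ℕ} {f h : ℤ → ℤ} (hf : Inv (posInterval m) f) (hh : Inv (posInterval m) h)
    (hfh : ∀ x ∈ posInterval m, (x < h x ↔ x < f x)) :
    ∀ x ∈ posInterval m, (h x < x ↔ f x < x) := by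
  intro x hx
  have := hf.ne x hx
  have := hh.ne x hx
  have := hfh x hx
  omega

lemma hatOf_lift {m : ℕ} {f h : ℤ → ℤ} (hf : Inv (posInterval m) f) (hh : Inv (posInterval m) h)
    (hnc : NC (posInterval m) h) (hfh : ∀ x ∈ posInterval m, (x < h x ↔ x < f x))
    (e : ℤ → ZMod 2) (he : ∀ x ∈ posInterval m, e (f x) = e x) :
    hatOf m (pairsOf (pmSet m) (lift f e)) = pairsOf (pmSet m) (lift h 0) := by
  have hr := right_iff hf hh hfh
  have hH := hh.lift 0 (fun _ _ => rfl)
  have hex : ∃ ρ, HatProps m (pairsOf (pmSet m) (lift f e)) ρ := by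
    refine ⟨pairsOf (pmSet m) (lift h 0), hH.partition, fun B hB => Or.inl (hH.isPair B hB),
      (hnc.lift hh).nonCrossing hH, negSet_mem_lift 0, ?_, ?_, ?_, ?_⟩
    · rintro B ⟨x, hx, rfl⟩
      have h1 := lift_pos_iff hh 0 hx
      have h2 := (hH.mem x hx).1
      have h3 := hx.1
      simp only [Pi.zero_apply, iff_true] at h1
      rcases lt_or_gt_of_ne h3 with h0 | h0
      · right
        rintro y (rfl | rfl) <;> omega
      · left
        rintro y (rfl | rfl) <;> omega
    · rw [posRightLegs_lift hf e he, posRightLegs_lift hh 0 (fun _ _ => rfl)]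
      ext x
      exact and_congr_right fun hx => hr x hx
    · rw [negLeftLegs_lift hf e he, negLeftLegs_lift hh 0 (fun _ _ => rfl)]
      ext x
      exact and_congr_right fun hx => hr _ hx
    · rintro ⟨a, b, c, -, -, -, hc⟩
      rw [← Set.pair_eq_singleton, hH.pair_mem_iff] at hc
      exact hH.ne c hc.1 hc.2.symm
  rw [hatOf, dif_pos hex]
  obtain ⟨hpart, hblk, hN, hsym, hsign, hR, -, hcov⟩ := hex.choose_spec
  generalize hex.choose = ρ at *
  have hmemR : ∀ b, b ∈ posRightLegs ρ ↔ b ∈ posInterval m ∧ h b < b := by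
    intro b
    rw [hR, posRightLegs_lift hf e he]
    exact and_congr_right fun hx => (hr b hx).symm
  have hpm : ∀ a b : ℤ, ({a, b} : Set ℤ) ∈ ρ → a ∈ pmSet m ∧ b ∈ pmSet m := fun a b hab =>
    ⟨(hpart.1 _ hab).1 (Or.inl rfl), (hpart.1 _ hab).1 (Or.inr rfl)⟩
  have hsg : ∀ a b : ℤ, ({a, b} : Set ℤ) ∈ ρ → 0 < b → 0 < a := by
    intro a b hab hb
    rcases hsign _ hab with h1 | h1
    · exact h1 a (Or.inl rfl)
    · have := h1 b (Or.inr rfl); omega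
  have key := hat_unique hh hnc (fun x hx => hx.1) hN
    (fun B hB C hC x hxB hxC => block_unique hpart hB hC hxB hxC) ?_ ?_
  · have key2 : ∀ x ∈ posInterval m, ({x, h x} : Set ℤ) ∈ ρ := by
      intro x hx
      rcases lt_or_gt_of_ne (hh.ne x hx) with h1 | h1
      · rw [Set.pair_comm]; exact key x hx h1
      · have := key (h x) (hh.mem x hx) (by rw [hh.invol x hx]; exact h1)
        rwa [hh.invol x hx] at this
    apply eq_pairsOf hpart
    intro x hx
    rcases lt_or_gt_of_ne hx.1 with h0 | h0
    · rw [lift_zero_of_neg h0]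
      have h1 := mem_pmSet.1 hx
      rw [abs_of_neg h0] at h1
      have := hsym _ (key2 _ h1)
      rwa [negSet_pair, neg_neg] at this
    · rw [lift_zero_of_pos h0]
      exact key2 x (pos_mem_of_pm hx h0)
  · intro b hb hlt
    obtain ⟨a, hab, habρ, -⟩ := (hmemR b).2 ⟨hb, hlt⟩
    have ha0 := hsg a b habρ (by have := hb.1; omega)
    have haV := pos_mem_of_pm (hpm a b habρ).1 ha0
    refine ⟨a, haV, hab, habρ, ?_⟩
    by_contra hcon
    have h1 : h a < a := lt_of_le_of_ne (not_lt.1 hcon) (hh.ne a haV)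
    obtain ⟨a', ha', ha'ρ, -⟩ := (hmemR a).2 ⟨haV, h1⟩
    have := block_unique hpart habρ ha'ρ (x := a) (Or.inl rfl) (Or.inr rfl)
    rcases pair_eq_iff.1 this with ⟨h3, h4⟩ | ⟨h3, h4⟩ <;> omega
  · intro a ha b hb c hc hac hcb habρ hlt
    obtain ⟨D, ⟨hD, hcD⟩, -⟩ := hpart.2 c (pos_mem_pmSet hc)
    have hc1 := hc.1
    have hex : ∃ d, d ≠ c ∧ ({c, d} : Set ℤ) ∈ ρ := by
      rcases hblk D hD with ⟨u, v, huv, rfl⟩ | ⟨u, rfl⟩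
      · rcases hcD with rfl | rfl
        · exact ⟨v, huv.symm, hD⟩
        · exact ⟨u, huv, by rwa [Set.pair_comm]⟩
      · rw [Set.mem_singleton_iff] at hcD
        subst hcD
        exact (hcov ⟨a, b, c, hac, hcb, habρ, hD⟩).elim
    obtain ⟨d, hdc, hcd⟩ := hex
    have hdc' : ({d, c} : Set ℤ) ∈ ρ := by rwa [Set.pair_comm]
    have hd0 := hsg d c hdc' (by omega)
    have hdV := pos_mem_of_pm (hpm d c hdc').1 hd0
    rcases lt_or_gt_of_ne hdc with h1 | h1
    · have := ((hmemR c).1 ⟨d, h1, hdc', by omega⟩).2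
      omega
    · exact ⟨d, hdV, ((hmemR d).1 ⟨c, h1, hcd, by omega⟩).2, h1, hcd⟩

lemma leftLegs_pairsOf {S : Set ℤ} {f : ℤ → ℤ} (hf : Inv S f) :
    leftLegs (pairsOf S f) = {a | a ∈ S ∧ a < f a} := by
  ext a
  constructor
  · rintro ⟨b, hab, h⟩
    rw [hf.pair_mem_iff] at h
    obtain ⟨h1, rfl⟩ := h
    exact ⟨h1, hab⟩
  · rintro ⟨h1, h2⟩
    exact ⟨f a, h2, a, h1, rfl⟩

lemma hat2Of_eq {m : ℕ} {f h : ℤ → ℤ} (hf : Inv (posInterval m) f) (hh : Inv (posInterval m) h)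
    (hnc : NC (posInterval m) h) (hfh : ∀ x ∈ posInterval m, (x < h x ↔ x < f x)) :
    hat2Of m (pairsOf (posInterval m) f) = pairsOf (posInterval m) h := by
  have hex : ∃ ρ, Hat2Props m (pairsOf (posInterval m) f) ρ := by
    refine ⟨pairsOf (posInterval m) h, ⟨hh.partition, hh.isPair⟩, hnc.nonCrossing hh, ?_⟩
    rw [leftLegs_pairsOf hf, leftLegs_pairsOf hh]
    ext x
    exact and_congr_right fun hx => hfh x hx
  rw [hat2Of, dif_pos hex]
  obtain ⟨⟨hpart, hblk⟩, hN, hL⟩ := hex.choose_spec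
  generalize hex.choose = ρ at *
  obtain ⟨g, hg, rfl⟩ := exists_inv hpart hblk
  have hgl : ∀ a ∈ posInterval m, (a < g a ↔ a < h a) := by
    intro a ha
    have : a ∈ leftLegs (pairsOf (posInterval m) g) ↔ a ∈ leftLegs (pairsOf (posInterval m) f) := by
      rw [hL]
    rw [leftLegs_pairsOf hf, leftLegs_pairsOf hg] at this
    rw [hfh a ha]
    simpa [ha] using this
  have hgr := right_iff hg hh (fun x hx => (hgl x hx).symm)
  have key := hat_unique hh hnc (fun x hx => hx.1) hN
    (fun B hB C hC x hxB hxC => block_unique hpart hB hC hxB hxC) ?_ ?_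
  · apply eq_pairsOf hpart
    intro x hx
    rcases lt_or_gt_of_ne (hh.ne x hx) with h1 | h1
    · rw [Set.pair_comm]; exact key x hx h1
    · have := key (h x) (hh.mem x hx) (by rw [hh.invol x hx]; exact h1)
      rwa [hh.invol x hx] at this
  · intro b hb hlt
    have h1 := (hgr b hb).1 hlt
    refine ⟨g b, hg.mem b hb, h1, ?_, ?_⟩
    · rw [Set.pair_comm]; exact ⟨b, hb, rfl⟩
    · rw [← hgl _ (hg.mem b hb), hg.invol b hb]; exact h1
  · intro a ha b hb c hc hac hcb habρ hlt
    have h1 := (hgl c hc).2 hlt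
    refine ⟨g c, hg.mem c hc, ?_, h1, c, hc, rfl⟩
    rw [hgr _ (hg.mem c hc), hg.invol c hc]; exact h1

/-! ### Components -/

/-- Connectivity of points. -/
def Conn (F H : ℤ → ℤ) : ℤ → ℤ → Prop := Relation.ReflTransGen (fun a b => b = F a ∨ b = H a)

def cls (F H : ℤ → ℤ) (x : ℤ) : Set ℤ := {y | Conn F H x y}

section conn
variable {S : Set ℤ} {F H : ℤ → ℤ}

lemma Conn.stepF (x : ℤ) : Conn F H x (F x) := Relation.ReflTransGen.single (Or.inl rfl)
lemma Conn.stepH (x : ℤ) : Conn F H x (H x) := Relation.ReflTransGen.single (Or.inr rfl)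
lemma Conn.refl (x : ℤ) : Conn F H x x := Relation.ReflTransGen.refl
lemma Conn.trans {x y z : ℤ} (h1 : Conn F H x y) (h2 : Conn F H y z) : Conn F H x z :=
  Relation.ReflTransGen.trans h1 h2

lemma Conn.mem (hF : Inv S F) (hH : Inv S H) {x y : ℤ} (hx : x ∈ S) (h : Conn F H x y) : y ∈ S := by
  induction h with
  | refl => exact hx
  | tail _ h ih =>
    rcases h with rfl | rfl
    · exact hF.mem _ ih
    · exact hH.mem _ ih

lemma Conn.symm (hF : Inv S F) (hH : Inv S H) {x y : ℤ} (hx : x ∈ S) (h : Conn F H x y) :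
    Conn F H y x := by
  induction h with
  | refl => exact Conn.refl x
  | @tail b c h0 h ih =>
    have hb := Conn.mem hF hH hx h0
    refine Conn.trans ?_ ih
    rcases h with rfl | rfl
    · have := Conn.stepF (F := F) (H := H) (F b)
      rwa [hF.invol _ hb] at this
    · have := Conn.stepH (F := F) (H := H) (H b)
      rwa [hH.invol _ hb] at this

lemma cls_eq_iff (hF : Inv S F) (hH : Inv S H) {x y : ℤ} (hx : x ∈ S) :
    cls F H x = cls F H y ↔ Conn F H x y := by
  constructor
  · intro h
    have : y ∈ cls F H y := Conn.refl y
    rw [← h] at this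
    exact this
  · intro h
    ext z
    exact ⟨fun h1 => (h.symm hF hH hx).trans h1, fun h1 => h.trans h1⟩

lemma compOf_eq (hF : Inv S F) (hH : Inv S H) {x : ℤ} (hx : x ∈ S) :
    compOf (pairsOf S F) (pairsOf S H) {x, F x} = (fun y => ({y, F y} : Set ℤ)) '' cls F H x := by
  ext B
  constructor
  · intro h
    change Relation.ReflTransGen _ _ _ at h
    induction h with
    | refl => exact ⟨x, Conn.refl x, rfl⟩
    | @tail A B _ hs ih =>
      obtain ⟨y, hy, rfl⟩ := ih
      obtain ⟨hA, hB, C, hC, ⟨a, haA, haC⟩, ⟨b, hbB, hbC⟩⟩ := hs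
      have hxa : Conn F H x a := by
        rcases haA with rfl | rfl
        · exact hy
        · exact hy.trans (Conn.stepF _)
      obtain ⟨-, rfl⟩ := hH.block_eq hC haC
      have hxb : Conn F H x b := by
        rcases hbC with rfl | rfl
        · exact hxa
        · exact hxa.trans (Conn.stepH _)
      exact ⟨b, hxb, (hF.block_eq hB hbB).2.symm⟩
  · rintro ⟨y, hy, rfl⟩
    change Relation.ReflTransGen _ _ _
    change Relation.ReflTransGen _ _ _ at hy
    induction hy with
    | refl => exact Relation.ReflTransGen.refl
    | @tail y z hy hs ih =>
      have hyS := Conn.mem hF hH hx hy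
      rcases hs with rfl | rfl
      · dsimp only
        rw [hF.invol y hyS, Set.pair_comm (F y) y]; exact ih
      · exact ih.tail ⟨⟨y, hyS, rfl⟩, ⟨H y, hH.mem y hyS, rfl⟩, {y, H y}, ⟨y, hyS, rfl⟩,
          ⟨y, Or.inl rfl, Or.inl rfl⟩, ⟨H y, Or.inl rfl, Or.inr rfl⟩⟩

lemma sUnion_compOf (hF : Inv S F) (hH : Inv S H) {x : ℤ} (hx : x ∈ S) :
    ⋃₀ (compOf (pairsOf S F) (pairsOf S H) {x, F x}) = cls F H x := by
  rw [compOf_eq hF hH hx]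
  ext z
  constructor
  · rintro ⟨_, ⟨y, hy, rfl⟩, hz⟩
    rcases hz with rfl | rfl
    · exact hy
    · exact Conn.trans hy (Conn.stepF _)
  · intro hz
    exact ⟨_, ⟨z, hz, rfl⟩, Or.inl rfl⟩

lemma comps_ncard (hF : Inv S F) (hH : Inv S H) (P : Set ℤ → Prop) :
    {K ∈ CompsOf (pairsOf S F) (pairsOf S H) | P (⋃₀ K)}.ncard = {Q ∈ cls F H '' S | P Q}.ncard := by
  have : {Q ∈ cls F H '' S | P Q} =
      (fun K : Set (Set ℤ) => ⋃₀ K) '' {K ∈ CompsOf (pairsOf S F) (pairsOf S H) | P (⋃₀ K)} := by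
    ext Q
    constructor
    · rintro ⟨⟨x, hx, rfl⟩, hP⟩
      refine ⟨_, ⟨⟨{x, F x}, ⟨x, hx, rfl⟩, rfl⟩, ?_⟩, sUnion_compOf hF hH hx⟩
      rw [sUnion_compOf hF hH hx]; exact hP
    · rintro ⟨_, ⟨⟨_, ⟨x, hx, rfl⟩, rfl⟩, hP⟩, rfl⟩
      dsimp only
      rw [sUnion_compOf hF hH hx] at hP ⊢
      exact ⟨⟨x, hx, rfl⟩, hP⟩
  rw [this, Set.InjOn.ncard_image]
  rintro _ ⟨⟨_, ⟨x, hx, rfl⟩, rfl⟩, -⟩ _ ⟨⟨_, ⟨y, hy, rfl⟩, rfl⟩, -⟩ h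
  dsimp only at h
  rw [sUnion_compOf hF hH hx, sUnion_compOf hF hH hy] at h
  rw [compOf_eq hF hH hx, compOf_eq hF hH hy, h]

end conn

section cover
variable {m : ℕ} {f h : ℤ → ℤ} {e : ℤ → ZMod 2}

lemma conn_abs (hf : Inv (posInterval m) f) (hh : Inv (posInterval m) h)
    (he : ∀ x ∈ posInterval m, e (f x) = e x) {x y : ℤ} (hx : x ∈ pmSet m)
    (hc : Conn (lift f e) (lift h 0) x y) : Conn f h |x| |y| := by
  have hF := hf.lift e he
  have hH := hh.lift 0 (fun _ _ => rfl)
  induction hc with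
  | refl => exact Conn.refl _
  | @tail b c h0 hs ih =>
    have hb := Conn.mem hF hH hx h0
    refine ih.trans ?_
    rcases hs with rfl | rfl
    · rw [abs_lift hf e hb]; exact Conn.stepF _
    · rw [abs_lift hh 0 hb]; exact Conn.stepH _

lemma conn_lift (hf : Inv (posInterval m) f) (hh : Inv (posInterval m) h)
    (he : ∀ x ∈ posInterval m, e (f x) = e x) {x v : ℤ} (hx : x ∈ pmSet m)
    (hc : Conn f h |x| v) : ∃ y, |y| = v ∧ Conn (lift f e) (lift h 0) x y := by
  have hF := hf.lift e he
  have hH := hh.lift 0 (fun _ _ => rfl)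
  induction hc with
  | refl => exact ⟨x, rfl, Conn.refl _⟩
  | @tail b c h0 hs ih =>
    obtain ⟨y, rfl, hy⟩ := ih
    have hyp := Conn.mem hF hH hx hy
    rcases hs with rfl | rfl
    · exact ⟨_, abs_lift hf e hyp, hy.trans (Conn.stepF _)⟩
    · exact ⟨_, abs_lift hh 0 hyp, hy.trans (Conn.stepH _)⟩

lemma conn_neg (hf : Inv (posInterval m) f) (hh : Inv (posInterval m) h)
    (he : ∀ x ∈ posInterval m, e (f x) = e x) {x y : ℤ} (hx : x ∈ pmSet m)
    (hc : Conn (lift f e) (lift h 0) x y) : Conn (lift f e) (lift h 0) (-x) (-y) := by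
  have hF := hf.lift e he
  have hH := hh.lift 0 (fun _ _ => rfl)
  induction hc with
  | refl => exact Conn.refl _
  | @tail b c h0 hs ih =>
    have hb := Conn.mem hF hH hx h0
    refine ih.trans ?_
    rcases hs with rfl | rfl
    · rw [← lift_neg f e hb.1]; exact Conn.stepF _
    · rw [← lift_neg h 0 hb.1]; exact Conn.stepH _

lemma negSet_cls (hf : Inv (posInterval m) f) (hh : Inv (posInterval m) h)
    (he : ∀ x ∈ posInterval m, e (f x) = e x) {x : ℤ} (hx : x ∈ pmSet m) :
    negSet (cls (lift f e) (lift h 0) x) = cls (lift f e) (lift h 0) (-x) := by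
  ext y
  constructor
  · rintro ⟨z, hz, rfl⟩
    exact conn_neg hf hh he hx hz
  · intro hy
    refine ⟨-y, ?_, neg_neg y⟩
    have := conn_neg hf hh he (neg_mem_pmSet.2 hx) hy
    rwa [neg_neg] at this

lemma conn_self_neg (hf : Inv (posInterval m) f) (hh : Inv (posInterval m) h)
    (he : ∀ x ∈ posInterval m, e (f x) = e x) {x y : ℤ} (hx : x ∈ pmSet m)
    (hc : Conn (lift f e) (lift h 0) x y) (hn : Conn (lift f e) (lift h 0) x (-x)) :
    Conn (lift f e) (lift h 0) y (-y) := by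
  have hF := hf.lift e he
  have hH := hh.lift 0 (fun _ _ => rfl)
  exact ((hc.symm hF hH hx).trans hn).trans (conn_neg hf hh he hx hc)

lemma neg_cls_iff (hf : Inv (posInterval m) f) (hh : Inv (posInterval m) h)
    (he : ∀ x ∈ posInterval m, e (f x) = e x) {x : ℤ} (hx : x ∈ pmSet m) :
    negSet (cls (lift f e) (lift h 0) x) = cls (lift f e) (lift h 0) x ↔
      Conn (lift f e) (lift h 0) x (-x) := by
  rw [negSet_cls hf hh he hx, eq_comm,
    cls_eq_iff (hf.lift e he) (hh.lift 0 (fun _ _ => rfl)) hx]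

/-- every class downstairs is represented by plus or minus a representative. -/
lemma exists_rep (hf : Inv (posInterval m) f) (hh : Inv (posInterval m) h)
    (he : ∀ x ∈ posInterval m, e (f x) = e x) {C : Type*} {rep : C → ℤ}
    (hrep : ∀ k, rep k ∈ posInterval m)
    (hsurj : ∀ x ∈ posInterval m, ∃ k, Conn f h (rep k) x) {x : ℤ} (hx : x ∈ pmSet m) :
    ∃ k, Conn (lift f e) (lift h 0) (rep k) x ∨ Conn (lift f e) (lift h 0) (-rep k) x := by
  have hF := hf.lift e he
  have hH := hh.lift 0 (fun _ _ => rfl)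
  obtain ⟨k, hk⟩ := hsurj _ (mem_pmSet.1 hx)
  refine ⟨k, ?_⟩
  obtain ⟨y, hy, hc⟩ := conn_lift hf hh he hx (hk.symm hf hh (hrep k))
  have hc' := hc.symm hF hH hx
  have h1 := (hrep k).1
  rcases abs_eq (show 0 ≤ rep k by omega) |>.1 hy with rfl | rfl
  · exact Or.inl hc'
  · exact Or.inr hc'

lemma neg_ncard (hf : Inv (posInterval m) f) (hh : Inv (posInterval m) h)
    (he : ∀ x ∈ posInterval m, e (f x) = e x) {C : Type*} {rep : C → ℤ}
    (hrep : ∀ k, rep k ∈ posInterval m)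
    (hinj : ∀ k k', Conn f h (rep k) (rep k') → k = k')
    (hsurj : ∀ x ∈ posInterval m, ∃ k, Conn f h (rep k) x) :
    {Q ∈ cls (lift f e) (lift h 0) '' pmSet m | negSet Q = Q}.ncard =
      {k | Conn (lift f e) (lift h 0) (rep k) (-rep k)}.ncard := by
  have hF := hf.lift e he
  have hH := hh.lift 0 (fun _ _ => rfl)
  have hpm := fun k => pos_mem_pmSet (hrep k)
  have : {Q ∈ cls (lift f e) (lift h 0) '' pmSet m | negSet Q = Q} =
      (fun k => cls (lift f e) (lift h 0) (rep k)) ''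
        {k | Conn (lift f e) (lift h 0) (rep k) (-rep k)} := by
    ext Q
    constructor
    · rintro ⟨⟨x, hx, rfl⟩, hQ⟩
      rw [neg_cls_iff hf hh he hx] at hQ
      obtain ⟨k, hk | hk⟩ := exists_rep hf hh he hrep hsurj hx
      · exact ⟨k, conn_self_neg hf hh he hx (hk.symm hF hH (hpm k)) hQ,
          (cls_eq_iff hF hH (hpm k)).2 hk⟩
      · have h1 := hk.symm hF hH (neg_mem_pmSet.2 (hpm k))
        have h2 := conn_self_neg hf hh he hx h1 hQ
        rw [neg_neg] at h2
        have h3 := h2.symm hF hH (neg_mem_pmSet.2 (hpm k))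
        exact ⟨k, h3, (cls_eq_iff hF hH (hpm k)).2 (h3.trans hk)⟩
    · rintro ⟨k, hk, rfl⟩
      exact ⟨⟨_, hpm k, rfl⟩, (neg_cls_iff hf hh he (hpm k)).2 hk⟩
  rw [this, Set.InjOn.ncard_image]
  intro k _ k' _ hkk
  have := conn_abs hf hh he (hpm k) ((cls_eq_iff hF hH (hpm k)).1 hkk)
  have h1 := (hrep k).1
  have h2 := (hrep k').1
  rw [abs_of_pos (show 0 < rep k by omega), abs_of_pos (show 0 < rep k' by omega)] at this
  exact hinj k k' this

lemma nonneg_ncard (hf : Inv (posInterval m) f) (hh : Inv (posInterval m) h)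
    (he : ∀ x ∈ posInterval m, e (f x) = e x) {C : Type*} [Finite C] {rep : C → ℤ}
    (hrep : ∀ k, rep k ∈ posInterval m)
    (hinj : ∀ k k', Conn f h (rep k) (rep k') → k = k')
    (hsurj : ∀ x ∈ posInterval m, ∃ k, Conn f h (rep k) x) :
    {Q ∈ cls (lift f e) (lift h 0) '' pmSet m | ¬ negSet Q = Q}.ncard =
      2 * {k | ¬ Conn (lift f e) (lift h 0) (rep k) (-rep k)}.ncard := by
  have hF := hf.lift e he
  have hH := hh.lift 0 (fun _ _ => rfl)
  have hpm := fun k => pos_mem_pmSet (hrep k)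
  have hpm' := fun k => neg_mem_pmSet.2 (hpm k)
  have hab : ∀ k, |rep k| = rep k := fun k => abs_of_pos (by have := (hrep k).1; omega)
  have : {Q ∈ cls (lift f e) (lift h 0) '' pmSet m | ¬ negSet Q = Q} =
      (fun k => cls (lift f e) (lift h 0) (rep k)) ''
        {k | ¬ Conn (lift f e) (lift h 0) (rep k) (-rep k)} ∪
      (fun k => cls (lift f e) (lift h 0) (-rep k)) ''
        {k | ¬ Conn (lift f e) (lift h 0) (rep k) (-rep k)} := by
    ext Q
    constructor
    · rintro ⟨⟨x, hx, rfl⟩, hQ⟩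
      rw [neg_cls_iff hf hh he hx] at hQ
      obtain ⟨k, hk | hk⟩ := exists_rep hf hh he hrep hsurj hx
      · exact Or.inl ⟨k, fun h1 => hQ (conn_self_neg hf hh he (hpm k) hk h1),
          (cls_eq_iff hF hH (hpm k)).2 hk⟩
      · refine Or.inr ⟨k, fun h1 => hQ (conn_self_neg hf hh he (hpm' k) hk ?_),
          (cls_eq_iff hF hH (hpm' k)).2 hk⟩
        rw [neg_neg]
        exact h1.symm hF hH (hpm k)
    · rintro (⟨k, hk, rfl⟩ | ⟨k, hk, rfl⟩)
      · exact ⟨⟨_, hpm k, rfl⟩, fun h1 => hk ((neg_cls_iff hf hh he (hpm k)).1 h1)⟩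
      · refine ⟨⟨_, hpm' k, rfl⟩, fun h1 => hk ?_⟩
        have := ((neg_cls_iff hf hh he (hpm' k)).1 h1)
        rw [neg_neg] at this
        exact this.symm hF hH (hpm' k)
  rw [this, Set.ncard_union_eq _ (Set.toFinite _) (Set.toFinite _), Set.InjOn.ncard_image,
    Set.InjOn.ncard_image, two_mul]
  · intro k _ k' _ hkk
    have := conn_abs hf hh he (hpm' k) ((cls_eq_iff hF hH (hpm' k)).1 hkk)
    rw [abs_neg, abs_neg, hab, hab] at this
    exact hinj k k' this
  · intro k _ k' _ hkk
    have := conn_abs hf hh he (hpm k) ((cls_eq_iff hF hH (hpm k)).1 hkk)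
    rw [hab, hab] at this
    exact hinj k k' this
  · rw [Set.disjoint_left]
    rintro _ ⟨k, hk, rfl⟩ ⟨k', hk', hkk⟩
    have h1 := (cls_eq_iff hF hH (hpm' k')).1 hkk
    have := conn_abs hf hh he (hpm' k') h1
    rw [abs_neg, hab, hab] at this
    have h2 := hinj _ _ this
    subst h2
    exact hk (h1.symm hF hH (hpm' _))

lemma zmod2_cases (a : ZMod 2) : a = 0 ∨ a = 1 := by
  revert a; decide

lemma not_conn_iff (hf : Inv (posInterval m) f) (hh : Inv (posInterval m) h)
    (he : ∀ x ∈ posInterval m, e (f x) = e x) {u : ℤ} (hu : u ∈ posInterval m) :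
    ¬ Conn (lift f e) (lift h 0) u (-u) ↔ ∃ s : ℤ → ZMod 2, ∀ x ∈ posInterval m, Conn f h u x →
      s x + s (h x) = 0 ∧ s x + s (f x) = e x := by
  classical
  have hF := hf.lift e he
  have hH := hh.lift 0 (fun _ _ => rfl)
  have hup := pos_mem_pmSet hu
  have hu0 : 0 < u := by have := hu.1; omega
  constructor
  · intro hn
    have hboth : ∀ x, Conn (lift f e) (lift h 0) u x → ¬ Conn (lift f e) (lift h 0) u (-x) := by
      intro x h1 h2
      have h3 := conn_neg hf hh he hup h2
      rw [neg_neg] at h3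
      exact hn (h1.trans (h3.symm hF hH (neg_mem_pmSet.2 hup)))
    have hone : ∀ x ∈ posInterval m, Conn f h u x →
        Conn (lift f e) (lift h 0) u x ∨ Conn (lift f e) (lift h 0) u (-x) := by
      intro x hx hc
      rw [← abs_of_pos hu0] at hc
      obtain ⟨y, hy, hc'⟩ := conn_lift hf hh he hup hc
      have := hx.1
      rcases abs_eq (show 0 ≤ x by omega) |>.1 hy with rfl | rfl
      · exact Or.inl hc'
      · exact Or.inr hc'
    refine ⟨fun x => if Conn (lift f e) (lift h 0) u x then 0 else 1, ?_⟩
    intro x hx hc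
    have hx0 : 0 < x := by have := hx.1; omega
    have hHx : lift h 0 x = h x := lift_zero_of_pos hx0
    have hHx' : lift h 0 (-x) = - h x := by rw [lift_neg h 0 hx0.ne', hHx]
    have hFx : lift f e x = if e x = 0 then f x else - f x := by
      simp [lift, hx0, abs_of_pos hx0]
    have hFx' : lift f e (-x) = if e x = 0 then - f x else f x := by
      rw [lift_neg f e hx0.ne', hFx]; split_ifs <;> simp
    rcases hone x hx hc with h1 | h1
    · have a1 := h1.trans (Conn.stepH x)
      rw [hHx] at a1
      have a2 := h1.trans (Conn.stepF x)
      rw [hFx] at a2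
      refine ⟨by simp [h1, a1], ?_⟩
      rcases zmod2_cases (e x) with h3 | h3
      · rw [if_pos h3] at a2
        simp [h1, a2, h3]
      · rw [if_neg (by rw [h3]; decide)] at a2
        have a3 := hboth _ a2
        rw [neg_neg] at a3
        simp [h1, a3, h3]
    · have b1 := hboth _ h1
      rw [neg_neg] at b1
      have a1 := h1.trans (Conn.stepH _)
      rw [hHx'] at a1
      have a2 := h1.trans (Conn.stepF _)
      rw [hFx'] at a2
      have a1' := hboth _ a1
      rw [neg_neg] at a1'
      refine ⟨by simp only [b1, a1', if_false]; decide, ?_⟩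
      rcases zmod2_cases (e x) with h3 | h3
      · rw [if_pos h3] at a2
        have a3 := hboth _ a2
        rw [neg_neg] at a3
        simp only [b1, a3, h3, if_false]; decide
      · rw [if_neg (by rw [h3]; decide)] at a2
        simp [b1, a2, h3]
  · rintro ⟨s, hs⟩ hcon
    have key : ∀ y, Conn (lift f e) (lift h 0) u y →
        s |y| + (if 0 < y then 0 else 1) = s u := by
      intro y hy
      induction hy with
      | refl => simp [abs_of_pos hu0, hu0]
      | @tail b c h0 hst ih =>
        have hb := Conn.mem hF hH hup h0
        have hcb := conn_abs hf hh he hup h0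
        rw [abs_of_pos hu0] at hcb
        obtain ⟨s1, s2⟩ := hs _ (mem_pmSet.1 hb) hcb
        rw [← ih]
        rcases hst with rfl | rfl
        · rw [abs_lift hf e hb]
          simp only [lift_pos_iff hf e hb]
          rw [← s2]
          rcases zmod2_cases (s |b|) with h1 | h1 <;> rcases zmod2_cases (s (f |b|)) with h2 | h2 <;>
            by_cases h3 : 0 < b <;> simp [h1, h2, h3] <;> decide
        · rw [abs_lift hh 0 hb]
          simp only [lift_pos_iff hh 0 hb, Pi.zero_apply, iff_true]
          rw [CharTwo.add_eq_zero.1 s1]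
    have := key _ hcon
    rw [abs_neg, abs_of_pos hu0, if_neg (by omega)] at this
    simp at this

end cover

section fiber
variable {m : ℕ} {f : ℤ → ℤ}

/-- Restriction of an involution to a subtype. -/
def res (hf : Inv (posInterval m) f) (x : posInterval m) : posInterval m :=
  ⟨f x, hf.mem x x.2⟩

open Classical in
/-- Extension of a sign assignment from left legs to all integers. -/
def ext (hf : Inv (posInterval m) f) (e : {x // x < res hf x} → ZMod 2) (z : ℤ) : ZMod 2 :=
  if hz : ∃ h : z ∈ posInterval m, z < f z then e ⟨⟨z, hz.1⟩, hz.2⟩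
  else if hz : ∃ h : f z ∈ posInterval m, f z < f (f z) then e ⟨⟨f z, hz.1⟩, hz.2⟩ else 0

lemma ext_left (hf : Inv (posInterval m) f) (e : {x // x < res hf x} → ZMod 2)
    (x : {x // x < res hf x}) : ext hf e x.1.1 = e x := by
  have : ∃ h : x.1.1 ∈ posInterval m, x.1.1 < f x.1.1 := ⟨x.1.2, x.2⟩
  rw [ext, dif_pos this]

lemma ext_left' (hf : Inv (posInterval m) f) (e : {x // x < res hf x} → ZMod 2)
    {x : ℤ} (hx : x ∈ posInterval m) (hlt : x < f x) : ext hf e x = e ⟨⟨x, hx⟩, hlt⟩ :=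
  ext_left hf e ⟨⟨x, hx⟩, hlt⟩

lemma ext_right (hf : Inv (posInterval m) f) (e : {x // x < res hf x} → ZMod 2)
    {x : ℤ} (hx : x ∈ posInterval m) (hlt : f x < x) : ext hf e x = ext hf e (f x) := by
  have h1 : ¬ ∃ h : x ∈ posInterval m, x < f x := by rintro ⟨-, h⟩; omega
  have h2 : ∃ h : f x ∈ posInterval m, f x < f (f x) :=
    ⟨hf.mem x hx, by rw [hf.invol x hx]; exact hlt⟩
  rw [ext_left' hf e h2.1 h2.2]
  rw [ext, dif_neg h1, dif_pos h2]

lemma ext_inv (hf : Inv (posInterval m) f) (e : {x // x < res hf x} → ZMod 2) :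
    ∀ x ∈ posInterval m, ext hf e (f x) = ext hf e x := by
  intro x hx
  rcases lt_or_gt_of_ne (hf.ne x hx) with h1 | h1
  · exact (ext_right hf e hx h1).symm
  · have := ext_right hf e (hf.mem x hx) (by rw [hf.invol x hx]; exact h1)
    rwa [hf.invol x hx] at this

/-- The element of the fiber given by a sign assignment. -/
def sig (hf : Inv (posInterval m) f) (e : {x // x < res hf x} → ZMod 2) : Set (Set ℤ) :=
  pairsOf (pmSet m) (lift f (ext hf e))

lemma sig_inj (hf : Inv (posInterval m) f) : Function.Injective (sig hf) := by
  intro e e' hee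
  ext1 x
  have hx := pos_mem_pmSet x.1.2
  have h1 : ({x.1.1, lift f (ext hf e) x.1.1} : Set ℤ) ∈ sig hf e' := by
    rw [← hee]; exact ⟨_, hx, rfl⟩
  rw [sig, (hf.lift _ (ext_inv hf e')).pair_mem_iff] at h1
  have h2 := lift_pos_iff hf (ext hf e) hx
  rw [h1.2, lift_pos_iff hf (ext hf e') hx] at h2
  have h0 := x.1.2.1
  have h0 : 0 < x.1.1 := by omega
  simp only [h0, true_iff, abs_of_pos h0, ext_left] at h2
  rcases zmod2_cases (e x) with h3 | h3 <;> rcases zmod2_cases (e' x) with h4 | h4 <;>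
    simp [h3, h4] at h2 ⊢

lemma sig_range (n : ℕ) (hf : Inv (posInterval (2 * n)) f) :
    {σ : Set (Set ℤ) | P2sym n σ ∧ Pmap σ = pairsOf (posInterval (2 * n)) f} =
      Set.range (sig hf) := by
  classical
  ext σ
  constructor
  · rintro ⟨⟨hpart, hpair, hneg, -⟩, hP⟩
    obtain ⟨G, hG, rfl⟩ := exists_inv hpart hpair
    have habs : ∀ x ∈ pmSet (2 * n), |G x| = f |x| := by
      intro x hx
      have : ({|x|, |G x|} : Set ℤ) ∈ pairsOf (posInterval (2 * n)) f := by
        rw [← hP]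
        refine ⟨{x, G x}, ⟨x, hx, rfl⟩, ?_⟩
        rw [Set.image_pair]
      exact (hf.pair_mem_iff.1 this).2
    have hGn : ∀ x ∈ pmSet (2 * n), G (-x) = - G x := by
      intro x hx
      have := hneg _ ⟨x, hx, rfl⟩
      rw [negSet_pair, hG.pair_mem_iff] at this
      exact this.2.symm
    let e : {x // x < res hf x} → ZMod 2 := fun x => if 0 < G x.1.1 then 0 else 1
    have hpos : ∀ x ∈ posInterval (2 * n), (0 < G x ↔ ext hf e x = 0) := by
      intro x hx
      have hL : ∀ y ∈ posInterval (2 * n), y < f y → (0 < G y ↔ ext hf e y = 0) := by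
        intro y hy hlt
        rw [ext_left' hf e hy hlt]
        simp [e]
      rcases lt_or_gt_of_ne (hf.ne x hx) with h1 | h1
      · rw [ext_right hf e hx h1, ← hL _ (hf.mem x hx) (by rw [hf.invol x hx]; exact h1)]
        have hxp := pos_mem_pmSet hx
        have hx0 : 0 < x := by have := hx.1; omega
        have hfx := (hf.mem x hx)
        have hfx0 : 0 < f x := by have := hfx.1; omega
        have h2 := habs x hxp
        rw [abs_of_pos hx0] at h2
        have h3 := hG.invol x hxp
        rcases abs_eq hfx0.le |>.1 h2 with h4 | h4
        · rw [h4] at h3 ⊢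
          rw [h3]; simp [hx0, hfx0]
        · rw [h4, hGn _ (pos_mem_pmSet hfx)] at h3
          rw [h4]; omega
      · exact hL x hx h1
    refine ⟨e, ?_⟩
    symm
    apply eq_pairsOf hpart
    intro x hx
    refine ⟨x, hx, ?_⟩
    congr 2
    apply eq_of_abs_of_pos (hG.mem x hx).1
    · rw [abs_lift hf _ hx, habs x hx]
    · rw [lift_pos_iff hf _ hx, ← hpos _ (mem_pmSet.1 hx)]
      rcases lt_or_gt_of_ne hx.1 with h0 | h0
      · rw [abs_of_neg h0, hGn x hx]
        have := (hG.mem x hx).1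
        omega
      · rw [abs_of_pos h0]
        simp [h0]
  · rintro ⟨e, rfl⟩
    have hF := hf.lift _ (ext_inv hf e)
    refine ⟨⟨hF.partition, hF.isPair, negSet_mem_lift _, ?_⟩, ?_⟩
    · rintro B ⟨x, hx, rfl⟩ h1
      rw [negSet_pair] at h1
      have := hx.1
      rcases pair_eq_iff.1 h1 with ⟨h2, -⟩ | ⟨h2, -⟩
      · omega
      · have h3 := abs_lift hf (ext hf e) hx
        rw [← h2, abs_neg] at h3
        exact hf.ne _ (mem_pmSet.1 hx) h3.symm
    · apply eq_pairsOf (S := posInterval (2 * n))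
      · have : Pmap (sig hf e) = pairsOf (posInterval (2 * n)) f := by
          ext B
          constructor
          · rintro ⟨_, ⟨x, hx, rfl⟩, rfl⟩
            refine ⟨|x|, mem_pmSet.1 hx, ?_⟩
            rw [Set.image_pair, abs_lift hf _ hx]
          · rintro ⟨x, hx, rfl⟩
            have hxp := pos_mem_pmSet hx
            refine ⟨_, ⟨x, hxp, rfl⟩, ?_⟩
            rw [Set.image_pair, abs_lift hf _ hxp, abs_of_pos (by have := hx.1; omega)]
        rw [this]
        exact hf.partition
      · intro x hx
        have hxp := pos_mem_pmSet hx
        refine ⟨_, ⟨x, hxp, rfl⟩, ?_⟩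
        rw [Set.image_pair, abs_lift hf _ hxp, abs_of_pos (by have := hx.1; omega)]

end fiber

lemma posInterval_eq (m : ℕ) : posInterval m = ((Finset.Icc (1 : ℤ) m : Finset ℤ) : Set ℤ) := by
  ext x; simp [mem_posInterval]

instance (m : ℕ) : Finite (posInterval m) := by
  rw [posInterval_eq]; infer_instance

lemma card_posInterval (m : ℕ) : Nat.card (posInterval m) = m := by
  rw [posInterval_eq]; simp


section final
variable {m : ℕ} {f h : ℤ → ℤ}

/-- The class map. -/
def clsMap (m : ℕ) (f h : ℤ → ℤ) (x : posInterval m) : ↥(cls f h '' posInterval m) :=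
  ⟨cls f h x, x, x.2, rfl⟩

lemma sec_conn (hf : Inv (posInterval m) f) (hh : Inv (posInterval m) h)
    (e : {x // x < res hf x} → ZMod 2) (k : ↥(cls f h '' posInterval m)) {u : ℤ}
    (hu : u ∈ posInterval m) (huk : cls f h u = k) :
    ¬ Conn (lift f (ext hf e)) (lift h 0) u (-u) ↔
      Sec (res hf) (res hh) (clsMap m f h) e k := by
  classical
  rw [not_conn_iff hf hh (ext_inv hf e) hu]
  have hk : ∀ x : posInterval m, clsMap m f h x = k ↔ Conn f h u x := by
    intro x
    rw [← cls_eq_iff hf hh hu, huk, Subtype.ext_iff, clsMap, eq_comm]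
  constructor
  · rintro ⟨s, hs⟩
    refine ⟨fun x => s x, ?_, ?_⟩
    · intro x hx
      have := (hs x.1.1 x.1.2 ((hk _).1 hx)).2
      rw [ext_left] at this
      exact this
    · intro x hx
      exact (hs x.1.1 x.1.2 ((hk _).1 hx)).1
  · rintro ⟨s, h1, h2⟩
    have hs : ∀ z (hz : z ∈ posInterval m),
        (fun z => if hz : z ∈ posInterval m then s ⟨z, hz⟩ else 0) z = s ⟨z, hz⟩ := by
      intro z hz; simp [hz]
    refine ⟨fun z => if hz : z ∈ posInterval m then s ⟨z, hz⟩ else 0, ?_⟩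
    intro x hx hc
    rw [hs x hx, hs _ (hf.mem x hx), hs _ (hh.mem x hx)]
    constructor
    · rcases lt_or_gt_of_ne (hh.ne x hx) with h3 | h3
      · have := h2 ⟨⟨h x, hh.mem x hx⟩, by
          change h x < h (h x)
          rw [hh.invol x hx]; exact h3⟩ ((hk _).2 (hc.trans (Conn.stepH x)))
        simp only [res, hh.invol x hx] at this
        rw [add_comm]; exact this
      · exact h2 ⟨⟨x, hx⟩, h3⟩ ((hk _).2 hc)
    · rcases lt_or_gt_of_ne (hf.ne x hx) with h3 | h3
      · have h4 : f x < f (f x) := by rw [hf.invol x hx]; exact h3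
        have := h1 ⟨⟨f x, hf.mem x hx⟩, h4⟩ ((hk _).2 (hc.trans (Conn.stepF x)))
        simp only [res, hf.invol x hx] at this
        rw [ext_right hf e hx h3, ext_left' hf e (hf.mem x hx) h4, add_comm]; exact this
      · rw [ext_left' hf e hx h3]
        exact h1 ⟨⟨x, hx⟩, h3⟩ ((hk _).2 hc)

lemma const_of_conn (hf : Inv (posInterval m) f) (hh : Inv (posInterval m) h)
    (s : posInterval m → ZMod 2) (h1 : ∀ x, s (res hf x) = s x) (h2 : ∀ x, s (res hh x) = s x)
    (x y : posInterval m) (hxy : clsMap m f h x = clsMap m f h y) : s x = s y := by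
  have hc : Conn f h x y := by
    rw [Subtype.ext_iff] at hxy
    exact (cls_eq_iff hf hh x.2).1 hxy
  have key : ∀ z : ℤ, Conn f h x z → ∀ hz : z ∈ posInterval m, s ⟨z, hz⟩ = s x := by
    intro z hz
    induction hz with
    | refl => intro _; rfl
    | @tail b c h0 hs ih =>
      intro hz
      have hb := Conn.mem hf hh x.2 h0
      rw [← ih hb]
      rcases hs with rfl | rfl
      · exact h1 ⟨b, hb⟩
      · exact h2 ⟨b, hb⟩
  exact (key y hc y.2).symm

end final

/-- for every pair partition π ∈ P₂(2n), the fiber P⁻¹(π) has exactly 2ⁿ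
elements, every σ in the fiber has c(σ) = c(π) cycles, and
Σ_{σ∈P⁻¹(π)} q₋^{c₋(σ)} q₊^{l_c(σ)} = (1+q₋)^{c(π)} (2q₊)^{n−c(π)}
(l_c(σ) = n − c(σ)). -/
theorem fiber_of_projection (n : ℕ) (qp qm : ℂ) (π : Set (Set ℤ))
    (hπ : P2on (2 * n) π) :
    {σ : Set (Set ℤ) | P2sym n σ ∧ Pmap σ = π}.ncard = 2 ^ n ∧
    (∀ σ : Set (Set ℤ), P2sym n σ → Pmap σ = π → cCount n σ = c2Count (2 * n) π) ∧
    (∑ᶠ σ ∈ {σ : Set (Set ℤ) | P2sym n σ ∧ Pmap σ = π},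
        qm ^ cNeg n σ * qp ^ (n - cCount n σ))
      = (1 + qm) ^ c2Count (2 * n) π * (2 * qp) ^ (n - c2Count (2 * n) π) := by
  classical
  obtain ⟨f, hf, rfl⟩ := exists_inv hπ.1 hπ.2
  obtain ⟨h, hh, hnc, hfh⟩ := exists_nc (2 * n) f hf
  have : Fintype (posInterval (2 * n)) := Fintype.ofFinite _
  have : Fintype ↥(cls f h '' posInterval (2 * n)) := Fintype.ofFinite _
  have hcardV : Fintype.card (posInterval (2 * n)) = 2 * n := by
    rw [← Nat.card_eq_fintype_card, card_posInterval]
  have hc2 : c2Count (2 * n) (pairsOf (posInterval (2 * n)) f) =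
      Fintype.card ↥(cls f h '' posInterval (2 * n)) := by
    rw [c2Count, hat2Of_eq hf hh hnc hfh]
    have := comps_ncard hf hh (fun _ => True)
    simp only [and_true] at this
    rw [← Nat.card_eq_fintype_card, Nat.card_coe_set_eq]
    exact this
  have hrf : ∀ x, res hf (res hf x) = x := fun x => Subtype.ext (hf.invol x x.2)
  have hrh : ∀ x, res hh (res hh x) = x := fun x => Subtype.ext (hh.invol x x.2)
  have hrfn : ∀ x, res hf x ≠ x := fun x hx => hf.ne x x.2 (congrArg Subtype.val hx)
  have hrhn : ∀ x, res hh x ≠ x := fun x hx => hh.ne x x.2 (congrArg Subtype.val hx)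
  have hcf : ∀ x, clsMap (2 * n) f h (res hf x) = clsMap (2 * n) f h x := fun x =>
    Subtype.ext ((cls_eq_iff hf hh x.2).2 (Conn.stepF _)).symm
  have hch : ∀ x, clsMap (2 * n) f h (res hh x) = clsMap (2 * n) f h x := fun x =>
    Subtype.ext ((cls_eq_iff hf hh x.2).2 (Conn.stepH _)).symm
  have hcs : Function.Surjective (clsMap (2 * n) f h) := by
    rintro ⟨_, x, hx, rfl⟩
    exact ⟨⟨x, hx⟩, rfl⟩
  have hsum := sum_sec (res hf) (res hh) (clsMap (2 * n) f h) hrf hrfn hrh hrhn hcf hch hcs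
    (const_of_conn hf hh) n hcardV qm
  have hrepx : ∀ k : ↥(cls f h '' posInterval (2 * n)), ∃ u, u ∈ posInterval (2 * n) ∧
    cls f h u = k := fun k => k.2
  choose rep hrep hrepk using hrepx
  have hinj : ∀ k k', Conn f h (rep k) (rep k') → k = k' := by
    intro k k' hc
    rw [← cls_eq_iff hf hh (hrep k), hrepk, hrepk] at hc
    exact Subtype.ext hc
  have hsurj : ∀ x ∈ posInterval (2 * n), ∃ k, Conn f h (rep k) x := by
    intro x hx
    refine ⟨⟨cls f h x, x, hx, rfl⟩, ?_⟩
    rw [← cls_eq_iff hf hh (hrep _), hrepk]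
  have hneg : ∀ e, cNeg n (sig hf e) =
      (Finset.univ.filter fun k => ¬ Sec (res hf) (res hh) (clsMap (2 * n) f h) e k).card := by
    intro e
    have he := ext_inv hf e
    rw [cNeg, sig, hatOf_lift hf hh hnc hfh _ he]
    refine (comps_ncard (hf.lift _ he) (hh.lift 0 fun _ _ => rfl) (fun Q => negSet Q = Q)).trans ?_
    rw [neg_ncard hf hh he hrep hinj hsurj, ← Set.ncard_coe_finset]
    congr 1
    ext k
    simp [← sec_conn hf hh e k (hrep k) (hrepk k)]
  have hcount : ∀ e, cCount n (sig hf e) = c2Count (2 * n) (pairsOf (posInterval (2 * n)) f) := by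
    intro e
    have he := ext_inv hf e
    have h1 : {K ∈ CompsOf (sig hf e) (hatOf (2 * n) (sig hf e)) | ¬NegComp K}.ncard =
      2 * (Finset.univ.filter fun k => Sec (res hf) (res hh) (clsMap (2 * n) f h) e k).card := by
      rw [sig, hatOf_lift hf hh hnc hfh _ he]
      refine (comps_ncard (hf.lift _ he) (hh.lift 0 fun _ _ => rfl)
        (fun Q => ¬ negSet Q = Q)).trans ?_
      rw [nonneg_ncard hf hh he hrep hinj hsurj, ← Set.ncard_coe_finset]
      congr 2
      ext k
      simp [← sec_conn hf hh e k (hrep k) (hrepk k)]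
    rw [cCount, h1, hneg, hc2, Nat.mul_div_cancel_left _ (by norm_num), add_comm,
      Finset.card_filter_add_card_filter_not, Finset.card_univ]
  have hrange := sig_range n hf
  have hcardL : Fintype.card {x // x < res hf x} = n := by
    have := card_left_legs (res hf) hrf hrfn
    omega
  refine ⟨?_, ?_, ?_⟩
  · rw [hrange, ← Nat.card_coe_set_eq, Nat.card_range_of_injective (sig_inj hf),
      Nat.card_eq_fintype_card, Fintype.card_fun, ZMod.card, hcardL]
  · intro σ h1 h2
    have : σ ∈ Set.range (sig hf) := by rw [← hrange]; exact ⟨h1, h2⟩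
    obtain ⟨e, rfl⟩ := this
    exact hcount e
  · rw [hrange, finsum_mem_range (sig_inj hf), finsum_eq_sum_of_fintype]
    simp only [hcount, hneg]
    have hsum2 := hsum.2
    rw [← Finset.sum_mul, hc2, mul_pow]
    refine Eq.trans (congrArg (fun z => z * _) (Eq.trans ?_ hsum2)) (by ring)
    convert rfl

end TypeB
end
end

section
/- Let q ∈ ℂ. The following are equivalent: (i) the reflection function σ ↦ q^{ℓ_R(σ)} is positive definite on D(∞); (ii) it is a character of D(∞); (iii) it is an extreme character of D(∞); (iv) q = 0 or q = 1/(2N+1) for some N ∈ ℤ. -/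
/-!
STATEMENT 19: for q ∈ ℂ the following are equivalent:
(i) the reflection function σ ↦ q^{ℓ_R(σ)} is positive definite on D(∞);
(ii) it is a character of D(∞);
(iii) it is an extreme character of D(∞);
(iv) q = 0 or q = 1/(2N+1) for some N ∈ ℤ.

D(∞) is the index-two subgroup of B(∞) of elements with an even number of negative
cycles; equivalently (signed model) those with g₁g₂⋯ = 1, i.e. with an even number of
positive i with σ(i) < 0.  Its reflections are the long reflections (i j)(−i −j),
|i| ≠ |j|, and ℓ_R is the minimal length of a factorization into them.  Characters of
D(∞) are encoded as functions on the ambient group Perm ℤ vanishing outside D(∞).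
-/

open scoped ComplexOrder

noncomputable section

namespace TypeD

/-- The infinite hyperoctahedral group B(∞): finitary permutations of ℤ∖{0}
commuting with negation. -/
def BInfSet : Set (Equiv.Perm ℤ) :=
  {σ | (∀ i : ℤ, σ (-i) = -σ i) ∧ {i : ℤ | σ i ≠ i}.Finite}

/-- D(∞): the index-two subgroup of B(∞) of elements with an even number of negative
cycles, equivalently (signed model) an even number of sign changes g_j = −1, i.e. an
even number of positive integers i with σ(i) < 0. -/
def DInfSet : Set (Equiv.Perm ℤ) :=
  {σ | σ ∈ BInfSet ∧ Even ({i : ℤ | 0 < i ∧ σ i < 0}.ncard)}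

/-- The long reflections (i j)(−i −j), |i| ≠ |j| — these are the reflections of D(∞). -/
def IsLongRefl (r : Equiv.Perm ℤ) : Prop :=
  ∃ i j : ℤ, i ≠ 0 ∧ j ≠ 0 ∧ |i| ≠ |j| ∧
    r = Equiv.swap i j * Equiv.swap (-i) (-j)

/-- The reflection length ℓ_R on D(∞): the minimal number of long reflections whose
product is σ. -/
def reflLenD (σ : Equiv.Perm ℤ) : ℕ :=
  sInf {k : ℕ | ∃ r : Fin k → Equiv.Perm ℤ,
    (∀ t, IsLongRefl (r t)) ∧ (List.ofFn r).prod = σ}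

/-- A function on a group is positive definite on a subset S. -/
def IsPosDefOn {G : Type*} [Group G] (S : Set G) (f : G → ℂ) : Prop :=
  ∀ (k : ℕ) (g : Fin k → G), (∀ i, g i ∈ S) → ∀ z : Fin k → ℂ,
    0 ≤ ∑ i : Fin k, ∑ j : Fin k, z i * (starRingEnd ℂ) (z j) * f ((g j)⁻¹ * g i)

open Classical in
/-- The reflection function q^{ℓ_R} of D(∞), extended by zero outside D(∞).
(The exponent is a natural number, so the value at the identity is 1 even for q = 0.) -/
def reflFunD (q : ℂ) : Equiv.Perm ℤ → ℂ :=
  fun σ => if σ ∈ DInfSet then q ^ reflLenD σ else 0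

/-- The set of characters of D(∞): central, positive definite, normalized functions,
encoded as functions on Perm ℤ vanishing outside D(∞). -/
def CharSetD : Set (Equiv.Perm ℤ → ℂ) :=
  {f | (∀ σ, σ ∉ DInfSet → f σ = 0) ∧
       (∀ g ∈ DInfSet, ∀ h ∈ DInfSet, f (h * g * h⁻¹) = f g) ∧
       IsPosDefOn DInfSet f ∧ f 1 = 1}

section
open Equiv

/-- B(n) as a subgroup. -/
def Bn (n : ℕ) : Subgroup (Perm ℤ) where
  carrier := {σ | (∀ i : ℤ, σ (-i) = -σ i) ∧ ∀ i : ℤ, (n : ℤ) < |i| → σ i = i}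
  mul_mem' := by
    rintro a b ⟨ha, ha'⟩ ⟨hb, hb'⟩
    refine ⟨fun i => by simp [ha, hb], fun i hi => by simp [hb' i hi, ha' i hi]⟩
  one_mem' := by simp
  inv_mem' := by
    rintro a ⟨ha, ha'⟩
    refine ⟨fun i => ?_, fun i hi => ?_⟩
    · rw [Perm.inv_eq_iff_eq, ha]; simp
    · rw [Perm.inv_eq_iff_eq, ha' i hi]

lemma mem_Bn {n : ℕ} {σ : Perm ℤ} :
    σ ∈ Bn n ↔ (∀ i : ℤ, σ (-i) = -σ i) ∧ ∀ i : ℤ, (n : ℤ) < |i| → σ i = i := Iff.rfl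

lemma Bn_mono {n n' : ℕ} (h : n ≤ n') {σ : Perm ℤ} (hσ : σ ∈ Bn n) : σ ∈ Bn n' :=
  ⟨hσ.1, fun i hi => hσ.2 i (by have : (n : ℤ) ≤ n' := by exact_mod_cast h
                                linarith)⟩

lemma Bn_zero {n : ℕ} {σ : Perm ℤ} (hσ : σ ∈ Bn n) : σ 0 = 0 := by
  have := hσ.1 0
  simp at this; omega

lemma Bn_abs_le {n : ℕ} {σ : Perm ℤ} (hσ : σ ∈ Bn n) {i : ℤ} (h : |i| ≤ n) : |σ i| ≤ n := by
  by_contra h'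
  push Not at h'
  have := hσ.2 _ h'
  have := σ.injective this
  rw [this] at h'
  linarith

lemma Bn_moved {n : ℕ} {σ : Perm ℤ} (hσ : σ ∈ Bn n) {i : ℤ} (h : σ i ≠ i) :
    |i| ≤ n ∧ |σ i| ≤ n ∧ i ≠ 0 ∧ σ i ≠ 0 := by
  have h1 : |i| ≤ n := by
    by_contra h'
    exact h (hσ.2 i (by linarith))
  have h0 := Bn_zero hσ
  refine ⟨h1, Bn_abs_le hσ h1, ?_, ?_⟩
  · rintro rfl; exact h h0
  · intro h2
    have : σ i = σ 0 := by rw [h0, h2]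
    have := σ.injective this
    subst this; exact h h0

lemma mem_BInf_iff {σ : Perm ℤ} : σ ∈ BInfSet ↔ ∃ n, σ ∈ Bn n := by
  constructor
  · rintro ⟨h1, h2⟩
    obtain ⟨b, hb⟩ := (h2.image (fun i => i.natAbs)).bddAbove
    refine ⟨b, h1, fun i hi => ?_⟩
    by_contra h
    have := hb ⟨i, h, rfl⟩
    simp only at this
    rw [Int.abs_eq_natAbs] at hi
    omega
  · rintro ⟨n, h⟩
    refine ⟨h.1, (Set.finite_Icc (-(n : ℤ)) n).subset ?_⟩
    intro i hi
    have := (Bn_moved h hi).1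
    exact abs_le.mp this

/-- the reflection taking i to j -/
def rf (i j : ℤ) : Perm ℤ := if j = -i then swap i j else swap i j * swap (-i) (-j)

lemma rf_self (i : ℤ) : rf i i = 1 := by
  unfold rf; split_ifs <;> ext <;> simp

lemma rf_apply {i j : ℤ} (hi : i ≠ 0) (hj : j ≠ 0) (x : ℤ) :
    rf i j x = if x = i then j else if x = j then i else if x = -i then -j
      else if x = -j then -i else x := by
  unfold rf
  split_ifs <;> simp only [Perm.mul_apply, swap_apply_def] <;> grind

lemma rf_mem {n : ℕ} {i j : ℤ} (hi : i ≠ 0) (hj : j ≠ 0) (h1 : |i| ≤ n) (h2 : |j| ≤ n) :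
    rf i j ∈ Bn n := by
  refine ⟨fun x => ?_, fun x hx => ?_⟩
  · rw [rf_apply hi hj, rf_apply hi hj]; split_ifs <;> omega
  · rw [rf_apply hi hj]; 
    have : x ≠ i := by rintro rfl; linarith
    have : x ≠ j := by rintro rfl; linarith
    have : x ≠ -i := by rintro rfl; rw [abs_neg] at hx; linarith
    have : x ≠ -j := by rintro rfl; rw [abs_neg] at hx; linarith
    simp [*]

lemma rf_sq {i j : ℤ} (hi : i ≠ 0) (hj : j ≠ 0) : rf i j * rf i j = 1 := by
  ext x
  simp only [Perm.mul_apply, Perm.one_apply, rf_apply hi hj]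
  split_ifs <;> omega

lemma isLongRefl_iff {r : Perm ℤ} : IsLongRefl r ↔
    ∃ i j : ℤ, i ≠ 0 ∧ j ≠ 0 ∧ |i| ≠ |j| ∧ r = rf i j := by
  unfold IsLongRefl rf
  constructor
  · rintro ⟨i, j, hi, hj, h, rfl⟩
    refine ⟨i, j, hi, hj, h, ?_⟩
    rw [if_neg]; rintro rfl; simp at h
  · rintro ⟨i, j, hi, hj, h, rfl⟩
    refine ⟨i, j, hi, hj, h, ?_⟩
    rw [if_neg]; rintro rfl; simp at h

/-- the support shrinks -/
lemma rf_step_supp {n : ℕ} {σ : Perm ℤ} (hσ : σ ∈ Bn n) {i : ℤ} (h : σ i ≠ i) :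
    {x | (rf i (σ i) * σ) x ≠ x} ⊆ {x | σ x ≠ x} \ {i} := by
  obtain ⟨h1, h2, h3, h4⟩ := Bn_moved hσ h
  have inj : σ (σ i) ≠ σ i := fun h' => h (σ.injective h')
  have e1 := hσ.1 i
  have e2 := hσ.1 (σ i)
  intro x hx
  simp only [Set.mem_ofPred_eq, Perm.mul_apply, rf_apply h3 h4] at hx
  refine ⟨fun hx' => hx ?_, ?_⟩
  · have := hx'
    have a1 : x ≠ i := by rintro rfl; exact h hx'
    have a2 : x ≠ σ i := by rintro rfl; exact inj hx'
    have a3 : x ≠ -i := by rintro rfl; omega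
    have a4 : x ≠ -σ i := by rintro rfl; omega
    simp [*]
  · rintro rfl
    apply hx
    simp only [h, if_true, if_false]

lemma rf_step_mem {n : ℕ} {σ : Perm ℤ} (hσ : σ ∈ Bn n) {i : ℤ} (h : σ i ≠ i) :
    rf i (σ i) * σ ∈ Bn n := by
  obtain ⟨h1, h2, h3, h4⟩ := Bn_moved hσ h
  exact mul_mem (rf_mem h3 h4 h1 h2) hσ

lemma Bn_induction (n : ℕ) {P : Perm ℤ → Prop} (h1 : P 1)
    (hs : ∀ σ ∈ Bn n, ∀ i, σ i ≠ i → P (rf i (σ i) * σ) → P σ) :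
    ∀ σ ∈ Bn n, P σ := by
  intro σ hσ
  induction hk : {x | σ x ≠ x}.ncard using Nat.strong_induction_on generalizing σ with
  | _ k ih =>
    by_cases hσ1 : σ = 1
    · subst hσ1; exact h1
    · obtain ⟨i, hi⟩ : ∃ i, σ i ≠ i := by
        by_contra h; push Not at h; exact hσ1 (Equiv.ext h)
      refine hs σ hσ i hi (ih _ ?_ _ (rf_step_mem hσ hi) rfl)
      rw [← hk]
      have hfin : {x | σ x ≠ x}.Finite := (mem_BInf_iff.2 ⟨n, hσ⟩).2
      refine Set.ncard_lt_ncard ?_ hfin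
      refine ⟨(rf_step_supp hσ hi).trans Set.sdiff_subset, fun hsub => ?_⟩
      have := rf_step_supp hσ hi (hsub hi)
      exact this.2 rfl

/-! ### odd functions with values in `ZMod m` -/

def Fx (n m : ℕ) (σ : Perm ℤ) : AddSubgroup (ℤ → ZMod m) where
  carrier := {f | (∀ i, f (-i) = - f i) ∧ (∀ i : ℤ, (n : ℤ) < |i| → f i = 0) ∧ ∀ i, f (σ i) = f i}
  add_mem' := by
    rintro a b ⟨ha, ha', ha''⟩ ⟨hb, hb', hb''⟩
    refine ⟨fun i => by simp [ha, hb]; ring, fun i hi => by simp [hb' i hi, ha' i hi],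
      fun i => by simp [*]⟩
  zero_mem' := by simp
  neg_mem' := by
    rintro a ⟨ha, ha', ha''⟩
    exact ⟨fun i => by simp [ha], fun i hi => by simp [ha' i hi], fun i => by simp [*]⟩

lemma mem_Fx {n m : ℕ} {σ : Perm ℤ} {f : ℤ → ZMod m} : f ∈ Fx n m σ ↔
    (∀ i, f (-i) = - f i) ∧ (∀ i : ℤ, (n : ℤ) < |i| → f i = 0) ∧ ∀ i, f (σ i) = f i := Iff.rfl

instance Fx_finite (n m : ℕ) [NeZero m] (σ : Perm ℤ) : Finite (Fx n m σ) := by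
  let F : Fx n m σ → (Set.Icc (-(n : ℤ)) n → ZMod m) := fun f x => f.1 x
  refine Finite.of_injective F ?_
  rintro ⟨f, hf⟩ ⟨g, hg⟩ h
  ext x
  by_cases hx : |x| ≤ n
  · exact congrFun h ⟨x, abs_le.mp hx⟩
  · push Not at hx
    simp [hf.2.1 x hx, hg.2.1 x hx]

lemma card_ker {V : Type*} [AddCommGroup V] {m : ℕ} (A : AddSubgroup V)
    (φ : V →+ ZMod m) : Nat.card A = Nat.card (A ⊓ φ.ker : AddSubgroup V) *
      Nat.card (φ.comp A.subtype).range := by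
  rw [← AddSubgroup.card_mul_index (φ.comp A.subtype).ker, AddSubgroup.index_ker]
  congr 1
  refine Nat.card_congr ⟨fun x => ⟨x.1.1, x.1.2, x.2⟩, fun x => ⟨⟨x.1, x.2.1⟩, x.2.2⟩, ?_, ?_⟩
  · intro x; rfl
  · intro x; rfl

lemma card_ker_le {V : Type*} [AddCommGroup V] {m : ℕ} [NeZero m] (A : AddSubgroup V)
    (φ : V →+ ZMod m) : Nat.card A ≤ m * Nat.card (A ⊓ φ.ker : AddSubgroup V) := by
  rw [card_ker A φ, mul_comm]
  gcongr
  refine (Nat.card_le_card_of_injective _ Subtype.val_injective).trans ?_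
  simp

lemma card_ker_eq {V : Type*} [AddCommGroup V] {m : ℕ} (A : AddSubgroup V)
    (φ : V →+ ZMod m) (h : ∀ a, ∃ v ∈ A, φ v = a) :
    Nat.card A = m * Nat.card (A ⊓ φ.ker : AddSubgroup V) := by
  rw [card_ker A φ, mul_comm]
  congr 1
  have : (φ.comp A.subtype).range = ⊤ := by
    rw [AddMonoidHom.range_eq_top]
    intro a
    obtain ⟨v, hv, h⟩ := h a
    exact ⟨⟨v, hv⟩, h⟩
  rw [this]
  simp

/-- difference functional -/
def dif (m : ℕ) (i j : ℤ) : (ℤ → ZMod m) →+ ZMod m :=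
  Pi.evalAddMonoidHom (fun _ => ZMod m) i - Pi.evalAddMonoidHom (fun _ => ZMod m) j

lemma dif_apply (m : ℕ) (i j : ℤ) (f : ℤ → ZMod m) : dif m i j f = f i - f j := rfl

lemma two_unit {m : ℕ} (hm : Odd m) : ∃ u : ZMod m, 2 * u = 1 := by
  obtain ⟨k, rfl⟩ := hm
  refine ⟨k + 1, ?_⟩
  have : ((2 * k + 1 : ℕ) : ZMod (2 * k + 1)) = 0 := ZMod.natCast_self _
  push_cast at this
  linear_combination this

lemma Fx_step {n m : ℕ} (hm : Odd m) {σ : Perm ℤ} (hσ : σ ∈ Bn n) {i : ℤ} (h : σ i ≠ i) :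
    Nat.card (Fx n m (rf i (σ i) * σ)) = m * Nat.card (Fx n m σ) := by
  obtain ⟨h1, h2, h3, h4⟩ := Bn_moved hσ h
  obtain ⟨u, hu⟩ := two_unit hm
  have hmem := rf_step_mem hσ h
  have hsupp := rf_step_supp hσ h
  generalize hj : σ i = j at *
  have key : ∀ f : ℤ → ZMod m, (∀ i, f (-i) = - f i) → f i = f j → ∀ x, f (rf i j x) = f x := by
    intro f hf hij x
    rw [rf_apply h3 h4]
    split_ifs <;> simp [*]
  have e : Fx n m σ = Fx n m (rf i j * σ) ⊓ (dif m i j).ker := by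
    ext f
    simp only [AddSubgroup.mem_inf, mem_Fx, AddMonoidHom.mem_ker, dif_apply, Perm.mul_apply]
    constructor
    · rintro ⟨a, b, c⟩
      have hij : f i = f j := by rw [← hj, c]
      refine ⟨⟨a, b, fun x => ?_⟩, by rw [hij, sub_self]⟩
      rw [key f a hij, c]
    · rintro ⟨⟨a, b, c⟩, d⟩
      have hij : f i = f j := sub_eq_zero.mp d
      refine ⟨a, b, fun x => ?_⟩
      rw [← key f a hij, c]
  rw [e]
  apply card_ker_eq
  intro a
  have hfi : (rf i j * σ) i = i := by
    by_contra h'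
    exact (hsupp h').2 rfl
  have hfi' : (rf i j * σ) (-i) = -i := by rw [hmem.1, hfi]
  have inj : ∀ x, (rf i j * σ) x = i ↔ x = i := fun x =>
    ⟨fun hx => (rf i j * σ).injective (hx.trans hfi.symm), fun hx => by rw [hx, hfi]⟩
  have inj' : ∀ x, (rf i j * σ) x = -i ↔ x = -i := fun x =>
    ⟨fun hx => (rf i j * σ).injective (hx.trans hfi'.symm), fun hx => by rw [hx, hfi']⟩
  have mk : ∀ b : ZMod m, (fun x : ℤ => if x = i then b else if x = -i then -b else 0)
      ∈ Fx n m (rf i j * σ) := by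
    intro b
    refine ⟨fun x => ?_, fun x hx => ?_, fun x => ?_⟩
    · dsimp only
      split_ifs <;> first | omega | simp
    · have : x ≠ i := by rintro rfl; linarith
      have : x ≠ -i := by rintro rfl; rw [abs_neg] at hx; linarith
      simp [*]
    · simp only [inj, inj']
  by_cases hji : j = -i
  · refine ⟨_, mk (u * a), ?_⟩
    rw [dif_apply]
    have : j ≠ i := by omega
    simp only [if_true, if_neg this, if_pos hji]
    linear_combination a * hu
  · refine ⟨_, mk a, ?_⟩
    rw [dif_apply]
    simp [h, hji]

lemma Fx_le {n m : ℕ} [NeZero m] {σ : Perm ℤ} {i j : ℤ} (hi : i ≠ 0) (hj : j ≠ 0) :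
    Nat.card (Fx n m σ) ≤ m * Nat.card (Fx n m (rf i j * σ)) := by
  refine (card_ker_le _ (dif m i j)).trans ?_
  gcongr
  refine Nat.card_le_card_of_injective _ (AddSubgroup.inclusion_injective (?_ : _ ≤ _))
  rintro f ⟨⟨a, b, c⟩, d⟩
  have hij : f i = f j := sub_eq_zero.mp d
  refine ⟨a, b, fun x => ?_⟩
  rw [Perm.mul_apply, ← c x, rf_apply hi hj]
  split_ifs <;> simp [*]

lemma exists_codim (σ : Perm ℤ) (hσ : σ ∈ BInfSet) : ∃ k : ℕ, ∀ n, σ ∈ Bn n → ∀ m, Odd m →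
    m ^ k * Nat.card (Fx n m σ) = Nat.card (Fx n m 1) := by
  obtain ⟨n₀, h₀⟩ := mem_BInf_iff.1 hσ
  refine Bn_induction n₀ (P := fun σ => ∃ k : ℕ, ∀ n, σ ∈ Bn n → ∀ m, Odd m →
    m ^ k * Nat.card (Fx n m σ) = Nat.card (Fx n m 1)) ⟨0, by simp⟩ ?_ σ h₀
  rintro σ - i hi ⟨k, hk⟩
  refine ⟨k + 1, fun n hn m hm => ?_⟩
  rw [← hk n (rf_step_mem hn hi) m hm, Fx_step hm hn hi]
  ring

open Classical in
def cd (σ : Perm ℤ) : ℕ := if h : σ ∈ BInfSet then (exists_codim σ h).choose else 0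

lemma cd_spec {n m : ℕ} {σ : Perm ℤ} (hσ : σ ∈ Bn n) (hm : Odd m) :
    m ^ cd σ * Nat.card (Fx n m σ) = Nat.card (Fx n m 1) := by
  have h : σ ∈ BInfSet := mem_BInf_iff.2 ⟨n, hσ⟩
  rw [cd, dif_pos h]
  exact (exists_codim σ h).choose_spec n hσ m hm

lemma Fx_pos (n m : ℕ) [NeZero m] (σ : Perm ℤ) : 0 < Nat.card (Fx n m σ) := Nat.card_pos

lemma cd_eq_of_card {n : ℕ} {σ τ : Perm ℤ} (hσ : σ ∈ Bn n) (hτ : τ ∈ Bn n)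
    (h : Nat.card (Fx n 3 σ) = Nat.card (Fx n 3 τ)) : cd σ = cd τ := by
  have h1 := cd_spec hσ (m := 3) (by decide)
  have h2 := cd_spec hτ (m := 3) (by decide)
  rw [← h2, h] at h1
  exact Nat.pow_right_injective (le_refl 2 |>.trans (by norm_num))
    (Nat.eq_of_mul_eq_mul_right (Fx_pos n 3 τ) h1)

lemma cd_step {n : ℕ} {σ : Perm ℤ} (hσ : σ ∈ Bn n) {i : ℤ} (h : σ i ≠ i) :
    cd σ = cd (rf i (σ i) * σ) + 1 := by
  have h1 := cd_spec hσ (m := 3) (by decide)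
  have h2 := cd_spec (rf_step_mem hσ h) (m := 3) (by decide)
  rw [Fx_step (by decide) hσ h, ← h1, ← mul_assoc, ← pow_succ] at h2
  exact (Nat.pow_right_injective (le_refl 2 |>.trans (by norm_num))
    (Nat.eq_of_mul_eq_mul_right (Fx_pos n 3 σ) h2)).symm

lemma cd_one : cd 1 = 0 := by
  have h1 := cd_spec (one_mem (Bn 0)) (m := 3) (by decide)
  have := Fx_pos 0 3 1
  have h2 : 3 ^ cd 1 = 1 := by nlinarith
  simpa using h2

lemma cd_eq_zero {n : ℕ} {σ : Perm ℤ} (hσ : σ ∈ Bn n) : cd σ = 0 ↔ σ = 1 := by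
  constructor
  · intro h
    by_contra hσ1
    obtain ⟨i, hi⟩ : ∃ i, σ i ≠ i := by
      by_contra h; push Not at h; exact hσ1 (Equiv.ext h)
    rw [cd_step hσ hi] at h
    omega
  · rintro rfl; exact cd_one

lemma cd_le {n : ℕ} {σ : Perm ℤ} (hσ : σ ∈ Bn n) {i j : ℤ} (hi : i ≠ 0) (hj : j ≠ 0)
    (h1 : |i| ≤ n) (h2 : |j| ≤ n) :
    cd (rf i j * σ) ≤ cd σ + 1 := by
  have h3 := cd_spec hσ (m := 3) (by decide)
  have h4 := cd_spec (mul_mem (rf_mem hi hj h1 h2) hσ) (m := 3) (by decide)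
  have h5 := Fx_le (n := n) (m := 3) (σ := σ) hi hj
  have h6 := Fx_pos n 3 (rf i j * σ)
  rw [← h3] at h4
  have h7 : 3 ^ cd (rf i j * σ) * Nat.card (Fx n 3 (rf i j * σ)) ≤
      3 ^ (cd σ + 1) * Nat.card (Fx n 3 (rf i j * σ)) := by
    rw [h4, pow_succ, mul_assoc]; gcongr
  have := Nat.le_of_mul_le_mul_right h7 h6
  exact (Nat.pow_le_pow_iff_right (by norm_num)).1 this

lemma cd_inv {n : ℕ} {σ : Perm ℤ} (hσ : σ ∈ Bn n) : cd σ⁻¹ = cd σ := by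
  apply cd_eq_of_card (inv_mem hσ) hσ
  congr 2
  have : Fx n 3 σ⁻¹ = Fx n 3 σ := by
    ext f
    simp only [mem_Fx]
    refine and_congr_right fun _ => and_congr_right fun _ => ?_
    constructor
    · intro h i
      have := h (σ i); simpa using this.symm
    · intro h i
      have := h (σ⁻¹ i); simpa using this.symm
  rw [this]

lemma cd_conj {n : ℕ} {σ g : Perm ℤ} (hσ : σ ∈ Bn n) (hg : g ∈ Bn n) :
    cd (g * σ * g⁻¹) = cd σ := by
  apply cd_eq_of_card (mul_mem (mul_mem hg hσ) (inv_mem hg)) hσ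
  have aux : ∀ g ∈ Bn n, ∀ σ, ∀ f ∈ Fx n 3 σ, f ∘ ⇑(g⁻¹) ∈ Fx n 3 (g * σ * g⁻¹) := by
    rintro g hg σ f ⟨a, b, c⟩
    have hg' := inv_mem hg
    refine ⟨fun x => ?_, fun x hx => ?_, fun x => ?_⟩
    · simp only [Function.comp_apply, hg'.1, a]
    · simp only [Function.comp_apply, hg'.2 x hx, b x hx]
    · simp [c]
  refine Nat.card_congr ⟨fun f => ⟨f.1 ∘ g, ?_⟩, fun f => ⟨f.1 ∘ ⇑(g⁻¹), aux g hg σ f f.2⟩, ?_, ?_⟩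
  · have := aux g⁻¹ (inv_mem hg) _ f f.2
    simpa [mul_assoc] using this
  · intro f; ext x; simp
  · intro f; ext x; simp

lemma cd_disjoint {n : ℕ} {σ τ : Perm ℤ} (hσ : σ ∈ Bn n) (hτ : τ ∈ Bn n)
    (h : ∀ x, σ x ≠ x → τ x = x) : cd (σ * τ) = cd σ + cd τ := by
  revert h
  refine Bn_induction n (P := fun σ => (∀ x, σ x ≠ x → τ x = x) → cd (σ * τ) = cd σ + cd τ)
    ?_ ?_ σ hσ
  · simp [cd_one]
  · intro σ hσ i hi ih h
    have e : (σ * τ) i = σ i := by simp [h i hi]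
    rw [cd_step hσ hi, cd_step (mul_mem hσ hτ) (i := i) (by rwa [e]), e, ← mul_assoc, ih]
    · ring
    · intro x hx
      exact h x (rf_step_supp hσ hi hx).1

/-! ### signs -/

def chi (n : ℕ) (σ : Perm ℤ) : ℤ := ∏ a ∈ Finset.Icc (1 : ℤ) n, Int.sign (σ a)

lemma Bn_abs_abs {n : ℕ} {σ : Perm ℤ} (hσ : σ ∈ Bn n) (x : ℤ) : abs (σ (abs x)) = |σ x| := by
  rcases abs_choice x with h | h <;> rw [h]
  rw [hσ.1, abs_neg]

lemma sign_Bn {n : ℕ} {σ : Perm ℤ} (hσ : σ ∈ Bn n) (x : ℤ) :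
    Int.sign (σ x) = Int.sign x * Int.sign (σ |x|) := by
  rcases lt_trichotomy x 0 with h | h | h
  · rw [abs_of_neg h, hσ.1, Int.sign_neg, Int.sign_eq_neg_one_of_neg h]; ring
  · subst h; simp [Bn_zero hσ]
  · rw [abs_of_pos h, Int.sign_eq_one_of_pos h, one_mul]

lemma Bn_abs_mem {n : ℕ} {σ : Perm ℤ} (hσ : σ ∈ Bn n) {a : ℤ} (ha : a ∈ Finset.Icc (1 : ℤ) n) :
    |σ a| ∈ Finset.Icc (1 : ℤ) n := by
  rw [Finset.mem_Icc] at *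
  refine ⟨?_, Bn_abs_le hσ (by rw [abs_of_pos (by omega)]; omega)⟩
  have : σ a ≠ 0 := by
    intro h
    have := σ.injective (h.trans (Bn_zero hσ).symm)
    omega
  have := abs_pos.2 this
  omega

lemma chi_mul {n : ℕ} {σ τ : Perm ℤ} (hσ : σ ∈ Bn n) (hτ : τ ∈ Bn n) :
    chi n (σ * τ) = chi n σ * chi n τ := by
  unfold chi
  simp only [Perm.mul_apply]
  rw [Finset.prod_congr rfl (fun a _ => sign_Bn hσ (τ a)), Finset.prod_mul_distrib, mul_comm]
  congr 1
  have key : ∀ τ ∈ Bn n, ∀ a ∈ Finset.Icc (1 : ℤ) n, abs (τ⁻¹ (abs (τ a))) = a := by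
    intro τ hτ a ha
    rw [Bn_abs_abs (inv_mem hτ)]
    rw [Finset.mem_Icc] at ha
    simp only [Perm.coe_inv, Equiv.symm_apply_apply]
    exact abs_of_pos (by omega)
  refine Finset.prod_bij' (fun a _ => |τ a|) (fun a _ => |τ⁻¹ a|) ?_ ?_ ?_ ?_ ?_
  · exact fun a ha => Bn_abs_mem hτ ha
  · exact fun a ha => Bn_abs_mem (inv_mem hτ) ha
  · exact key τ hτ
  · intro a ha
    have := key τ⁻¹ (inv_mem hτ) a ha
    simpa using this
  · intro a _; rfl

lemma chi_one (n : ℕ) : chi n 1 = 1 := by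
  unfold chi
  apply Finset.prod_eq_one
  intro a ha
  rw [Finset.mem_Icc] at ha
  exact Int.sign_eq_one_of_pos (by simp; omega)

lemma chi_inv {n : ℕ} {σ : Perm ℤ} (hσ : σ ∈ Bn n) : chi n σ * chi n σ⁻¹ = 1 := by
  rw [← chi_mul hσ (inv_mem hσ), mul_inv_cancel, chi_one]

lemma chi_long {n : ℕ} {i j : ℤ} (hi : i ≠ 0) (hj : j ≠ 0) (h1 : |i| ≤ n) (h2 : |j| ≤ n)
    (hij : |i| ≠ |j|) : chi n (rf i j) = 1 := by
  unfold chi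
  have p1 := abs_pos.2 hi
  have p2 := abs_pos.2 hj
  rw [Finset.prod_eq_mul_of_mem |i| |j| (by rw [Finset.mem_Icc]; omega)
    (by rw [Finset.mem_Icc]; omega) hij]
  · have := rf_apply hi hj i
    have := rf_apply hi hj j
    have hm := rf_mem hi hj h1 h2
    have e1 := sign_Bn hm i
    have e2 := sign_Bn hm j
    have f1 : rf i j i = j := by rw [rf_apply hi hj]; simp
    have f2 : rf i j j = i := by rw [rf_apply hi hj]; split_ifs <;> omega
    rw [f1] at e1
    rw [f2] at e2
    rcases hi.lt_or_gt with hi | hi <;> rcases hj.lt_or_gt with hj | hj <;>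
    simp only [Int.sign_eq_neg_one_of_neg, Int.sign_eq_one_of_pos, hi, hj] at e1 e2 <;>
    nlinarith
  · intro a ha hne
    rw [Finset.mem_Icc] at ha
    have : rf i j a = a := by
      rw [rf_apply hi hj]
      rcases abs_cases i with h | h <;> rcases abs_cases j with h' | h' <;>
      split_ifs <;> omega
    rw [this]
    exact Int.sign_eq_one_of_pos (by omega)

lemma chi_short {n : ℕ} {i : ℤ} (hi : i ≠ 0) (h1 : |i| ≤ n) : chi n (rf i (-i)) = -1 := by
  unfold chi
  have p1 := abs_pos.2 hi
  have hi' : -i ≠ 0 := by omega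
  rw [Finset.prod_eq_single_of_mem |i| (by rw [Finset.mem_Icc]; omega)]
  · apply Int.sign_eq_neg_one_of_neg
    rw [rf_apply hi hi']
    rcases abs_cases i with h | h <;> split_ifs <;> omega
  · intro a ha hne
    rw [Finset.mem_Icc] at ha
    have : rf i (-i) a = a := by
      rw [rf_apply hi hi']
      rcases abs_cases i with h | h <;> 
      split_ifs <;> omega
    rw [this]
    exact Int.sign_eq_one_of_pos (by omega)

lemma chi_eq_pow {n : ℕ} {σ : Perm ℤ} (hσ : σ ∈ Bn n) :
    chi n σ = (-1) ^ ({i : ℤ | 0 < i ∧ σ i < 0}.ncard) := by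
  have e : {i : ℤ | 0 < i ∧ σ i < 0} = ((Finset.Icc (1 : ℤ) n).filter (fun i => σ i < 0) : Set ℤ) := by
    ext i
    simp only [Set.mem_ofPred_eq, Finset.coe_filter, Finset.mem_Icc]
    constructor
    · rintro ⟨h1, h2⟩
      have := (Bn_moved hσ (i := i) (by omega)).1
      rw [abs_of_pos h1] at this
      omega
    · rintro ⟨h1, h2⟩; omega
  rw [e, Set.ncard_coe_finset, ← Finset.prod_const, Finset.prod_filter]
  unfold chi
  refine Finset.prod_congr rfl fun a ha => ?_
  have := Bn_abs_mem hσ ha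
  rw [Finset.mem_Icc] at this
  split_ifs with h
  · exact Int.sign_eq_neg_one_of_neg h
  · apply Int.sign_eq_one_of_pos
    rw [abs_of_nonneg (by omega)] at this
    omega

lemma mem_D_iff {n : ℕ} {σ : Perm ℤ} (hσ : σ ∈ Bn n) : σ ∈ DInfSet ↔ chi n σ = 1 := by
  rw [chi_eq_pow hσ]
  constructor
  · intro h; exact h.2.neg_one_pow
  · intro h
    refine ⟨mem_BInf_iff.2 ⟨n, hσ⟩, ?_⟩
    rwa [neg_one_pow_eq_one_iff_even (by norm_num)] at h

lemma exists_D {σ : Perm ℤ} (h : σ ∈ DInfSet) : ∃ n, σ ∈ Bn n := mem_BInf_iff.1 h.1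

/-- D(∞) as a subgroup -/
def DG : Subgroup (Perm ℤ) where
  carrier := DInfSet
  mul_mem' := by
    intro a b ha hb
    obtain ⟨n, hn⟩ := exists_D ha
    obtain ⟨n', hn'⟩ := exists_D hb
    have h1 : a ∈ Bn (max n n') := Bn_mono (le_max_left _ _) hn
    have h2 : b ∈ Bn (max n n') := Bn_mono (le_max_right _ _) hn'
    rw [mem_D_iff (mul_mem h1 h2), chi_mul h1 h2, (mem_D_iff h1).1 ha, (mem_D_iff h2).1 hb, one_mul]
  one_mem' := (mem_D_iff (one_mem (Bn 0))).2 (chi_one 0)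
  inv_mem' := by
    intro a ha
    obtain ⟨n, hn⟩ := exists_D ha
    rw [mem_D_iff (inv_mem hn)]
    have := chi_inv hn
    rwa [(mem_D_iff hn).1 ha, one_mul] at this

lemma mem_DG {σ : Perm ℤ} : σ ∈ DG ↔ σ ∈ DInfSet := Iff.rfl

/-- absolute value of a signed permutation -/
def ab (n : ℕ) : Bn n →* Perm (Fin (n + 1)) where
  toFun σ :=
    { toFun := fun a => ⟨(σ.1 (a : ℕ)).natAbs, by
        have := Bn_abs_le σ.2 (i := ((a : ℕ) : ℤ)) (by have := a.2; simp; omega)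
        rw [Int.abs_eq_natAbs] at this; omega⟩
      invFun := fun a => ⟨(σ.1⁻¹ (a : ℕ)).natAbs, by
        have := Bn_abs_le (inv_mem σ.2) (i := ((a : ℕ) : ℤ)) (by have := a.2; simp; omega)
        rw [Int.abs_eq_natAbs] at this; omega⟩
      left_inv := by
        intro a
        ext
        have := Bn_abs_abs (inv_mem σ.2) (σ.1 (a : ℕ))
        simp only [← Int.abs_eq_natAbs]
        zify
        rw [this]; simp
      right_inv := by
        intro a
        ext
        have := Bn_abs_abs (σ.2) (σ.1⁻¹ (a : ℕ))
        simp only [← Int.abs_eq_natAbs]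
        zify
        rw [this]; simp }
  map_one' := by ext a; simp
  map_mul' := by
    intro σ τ
    ext a
    have := Bn_abs_abs (σ.2) (τ.1 (a : ℕ))
    simp
    zify
    rw [this]

lemma ab_apply {n : ℕ} (σ : Bn n) (a : Fin (n + 1)) : ((ab n σ a : Fin (n + 1)) : ℤ) = |σ.1 (a : ℕ)| := by
  rw [Int.abs_eq_natAbs]; rfl

def eps (n : ℕ) (σ : Bn n) : ℤ := (Perm.sign (ab n σ) : ℤ) * chi n σ

lemma eps_mul {n : ℕ} (σ τ : Bn n) : eps n (σ * τ) = eps n σ * eps n τ := by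
  unfold eps
  rw [map_mul, Perm.sign_mul, Subgroup.coe_mul, chi_mul σ.2 τ.2]
  push_cast
  ring

lemma eps_rf {n : ℕ} {i j : ℤ} (hi : i ≠ 0) (hj : j ≠ 0) (h1 : |i| ≤ n) (h2 : |j| ≤ n)
    (hij : i ≠ j) : eps n ⟨rf i j, rf_mem hi hj h1 h2⟩ = -1 := by
  unfold eps
  have h1' := h1
  have h2' := h2
  rw [Int.abs_eq_natAbs] at h1' h2'
  have e : ab n ⟨rf i j, rf_mem hi hj h1 h2⟩ =
      swap ⟨i.natAbs, by omega⟩ ⟨j.natAbs, by omega⟩ := by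
    ext a
    zify
    rw [ab_apply]
    simp only [rf_apply hi hj, swap_apply_def, Fin.ext_iff, Int.abs_eq_natAbs]
    split_ifs <;> (try dsimp only) <;> omega
  by_cases h : |i| = |j|
  · have hji : j = -i := by
      rcases abs_eq_abs.1 h with h | h
      · exact absurd h hij
      · omega
    subst hji
    rw [e, chi_short hi h1]
    simp
  · rw [e, chi_long hi hj h1 h2 h, Perm.sign_swap]
    · simp
    · rw [Ne, Fin.ext_iff]; simp only; rw [Int.abs_eq_natAbs, Int.abs_eq_natAbs] at h; omega

lemma eps_eq {n : ℕ} (σ : Perm ℤ) (hσ : σ ∈ Bn n) : eps n ⟨σ, hσ⟩ = (-1) ^ cd σ := by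
  refine Bn_induction n (P := fun σ => ∀ hσ : σ ∈ Bn n, eps n ⟨σ, hσ⟩ = (-1) ^ cd σ) ?_ ?_ σ hσ hσ
  · intro h
    rw [cd_one]
    have : (⟨1, h⟩ : Bn n) = 1 := rfl
    rw [this, eps, map_one]
    simp [chi_one]
  · intro σ hσ i hi ih h
    obtain ⟨h1, h2, h3, h4⟩ := Bn_moved hσ hi
    have := ih (rf_step_mem hσ hi)
    have e : (⟨rf i (σ i) * σ, rf_step_mem hσ hi⟩ : Bn n) = ⟨rf i (σ i), rf_mem h3 h4 h1 h2⟩ * ⟨σ, h⟩ := rfl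
    rw [e, eps_mul, eps_rf h3 h4 h1 h2 hi.symm] at this
    rw [cd_step hσ hi, pow_succ, ← this]
    ring

lemma cd_parity {n : ℕ} {σ τ : Perm ℤ} (hσ : σ ∈ Bn n) (hτ : τ ∈ Bn n) :
    (-1 : ℂ) ^ cd (σ * τ) = (-1) ^ cd σ * (-1) ^ cd τ := by
  have : (-1 : ℤ) ^ cd (σ * τ) = (-1) ^ cd σ * (-1) ^ cd τ := by
    rw [← eps_eq _ hσ, ← eps_eq _ hτ, ← eps_eq _ (mul_mem hσ hτ), ← eps_mul]
    rfl
  exact_mod_cast congrArg (Int.cast : ℤ → ℂ) this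

/-! ### reflection length -/

lemma short_short {i j : ℤ} (hi : i ≠ 0) (hj : j ≠ 0) (h : |i| ≠ |j|) :
    rf i (-i) * rf j (-j) = rf i j * rf i (-j) := by
  have h1 : i ≠ j := by rintro rfl; exact h rfl
  have h2 : i ≠ -j := by rintro rfl; exact h (abs_neg j)
  have hi' : -i ≠ 0 := by omega
  have hj' : -j ≠ 0 := by omega
  ext x
  simp only [Perm.mul_apply, rf_apply hi hj, rf_apply hi hi', rf_apply hj hj', rf_apply hi hj']
  grind

lemma cd_le_length (l : List (Perm ℤ)) (hl : ∀ r ∈ l, IsLongRefl r) :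
    l.prod ∈ BInfSet ∧ cd l.prod ≤ l.length := by
  induction l with
  | nil => simp [cd_one, mem_BInf_iff, one_mem]
  | cons r l ih =>
    obtain ⟨h1, h2⟩ := ih (fun r hr => hl r (List.mem_cons_of_mem _ hr))
    obtain ⟨i, j, hi, hj, hij, rfl⟩ := isLongRefl_iff.1 (hl r List.mem_cons_self)
    obtain ⟨n, hn⟩ := mem_BInf_iff.1 h1
    have hn' : l.prod ∈ Bn (n + i.natAbs + j.natAbs) := Bn_mono (by omega) hn
    have b1 : |i| ≤ (n + i.natAbs + j.natAbs : ℕ) := by rw [Int.abs_eq_natAbs]; omega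
    have b2 : |j| ≤ (n + i.natAbs + j.natAbs : ℕ) := by rw [Int.abs_eq_natAbs]; omega
    rw [List.prod_cons, List.length_cons]
    refine ⟨mem_BInf_iff.2 ⟨_, mul_mem (rf_mem hi hj b1 b2) hn'⟩, ?_⟩
    exact (cd_le hn' hi hj b1 b2).trans (by omega)

lemma long_mem_D {i j : ℤ} (hi : i ≠ 0) (hj : j ≠ 0) (hij : |i| ≠ |j|) : rf i j ∈ DG := by
  have b1 : |i| ≤ (i.natAbs + j.natAbs : ℕ) := by rw [Int.abs_eq_natAbs]; omega
  have b2 : |j| ≤ (i.natAbs + j.natAbs : ℕ) := by rw [Int.abs_eq_natAbs]; omega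
  rw [mem_DG, mem_D_iff (rf_mem hi hj b1 b2)]
  exact chi_long hi hj b1 b2 hij

lemma exists_factor {n : ℕ} (k : ℕ) : ∀ σ ∈ Bn n, σ ∈ DG → cd σ = k →
    ∃ l : List (Perm ℤ), (∀ r ∈ l, IsLongRefl r) ∧ l.prod = σ ∧ l.length = k := by
  induction k using Nat.strong_induction_on with
  | _ k ih =>
  intro σ hσ hD hk
  by_cases hσ1 : σ = 1
  · subst hσ1; rw [cd_one] at hk; subst hk; exact ⟨[], by simp⟩
  by_cases hlong : ∃ i, |σ i| ≠ |i|
  · obtain ⟨i, hi⟩ := hlong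
    have hi' : σ i ≠ i := fun h => hi (by rw [h])
    obtain ⟨h1, h2, h3, h4⟩ := Bn_moved hσ hi'
    have hc := cd_step hσ hi'
    obtain ⟨l, hl, hp, hlen⟩ := ih (cd (rf i (σ i) * σ)) (by omega) _ (rf_step_mem hσ hi')
      (mul_mem (long_mem_D h3 h4 hi.symm) hD) rfl
    refine ⟨rf i (σ i) :: l, ?_, ?_, ?_⟩
    · intro r hr
      rcases List.mem_cons.1 hr with rfl | hr
      · exact isLongRefl_iff.2 ⟨i, σ i, h3, h4, hi.symm, rfl⟩
      · exact hl r hr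
    · rw [List.prod_cons, hp, ← mul_assoc, rf_sq h3 h4, one_mul]
    · simp; omega
  · push Not at hlong
    obtain ⟨i, hi⟩ : ∃ i, σ i ≠ i := by
      by_contra h; push Not at h; exact hσ1 (Equiv.ext h)
    have hi2 : σ i = -i := (abs_eq_abs.1 (hlong i)).resolve_left hi
    obtain ⟨h1, h2, h3, h4⟩ := Bn_moved hσ hi
    have hc := cd_step hσ hi
    have hm := rf_step_mem hσ hi
    rw [hi2] at hc hm h2 h4
    -- a second sign change
    obtain ⟨j, hj, hji⟩ : ∃ j, σ j ≠ j ∧ |i| ≠ |j| := by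
      by_contra hcon
      push Not at hcon
      have : rf i (-i) * σ = 1 := by
        ext x
        by_cases hx : σ x = x
        · rw [Perm.mul_apply, hx, rf_apply h3 h4]
          have a1 : x ≠ i := by rintro rfl; exact hi hx
          have a2 : x ≠ -i := by
            rintro rfl
            have := hσ.1 i
            omega
          simp [a1, a2]
        · have := hcon x hx
          rw [Perm.mul_apply, rf_apply h3 h4]
          rcases abs_eq_abs.1 this with h | h
          · subst h; rw [hi2]; simp
          · have hx' : x = -i := by omega
            subst hx'
            rw [hσ.1, hi2]; simp
      have hc1 := chi_mul (rf_mem h3 h4 h1 h2) hσ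
      rw [this, chi_one, chi_short h3 h1, (mem_D_iff hσ).1 hD] at hc1
      norm_num at hc1
    have hj2 : σ j = -j := (abs_eq_abs.1 (hlong j)).resolve_left hj
    obtain ⟨g1, g2, g3, g4⟩ := Bn_moved hσ hj
    have hij : (rf i (-i) * σ) j = -j := by
      rw [Perm.mul_apply, hj2, rf_apply h3 h4]
      have a1 : -j ≠ i := by rintro rfl; exact hji (abs_neg j)
      have a2 : j ≠ i := by rintro rfl; exact hji rfl
      have a3 : -j ≠ -i := by omega
      simp [a1, a2]
    have hj3 : (rf i (-i) * σ) j ≠ j := by rw [hij]; omega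
    have hc' := cd_step hm hj3
    have hm' := rf_step_mem hm hj3
    rw [hij] at hc' hm'
    rw [hj2] at g2 g4
    have hjj : |j| ≠ |i| := hji.symm
    have hj' : |j| ≠ |(-i)| := by rwa [abs_neg]
    have e : rf j (-j) * (rf i (-i) * σ) = rf j i * (rf j (-i) * σ) := by
      rw [← mul_assoc, short_short g3 h3 hjj, mul_assoc]
    obtain ⟨l, hl, hp, hlen⟩ := ih (cd (rf j (-j) * (rf i (-i) * σ))) (by omega) _ hm'
      (by rw [e]; exact mul_mem (long_mem_D g3 h3 hjj) (mul_mem (long_mem_D g3 h4 hj') hD)) rfl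
    refine ⟨rf j (-i) :: rf j i :: l, ?_, ?_, ?_⟩
    · intro r hr
      rcases List.mem_cons.1 hr with rfl | hr
      · exact isLongRefl_iff.2 ⟨j, -i, g3, h4, hj', rfl⟩
      rcases List.mem_cons.1 hr with rfl | hr
      · exact isLongRefl_iff.2 ⟨j, i, g3, h3, hjj, rfl⟩
      · exact hl r hr
    · rw [List.prod_cons, List.prod_cons, hp, e, ← mul_assoc (rf j i), rf_sq g3 h3, one_mul,
        ← mul_assoc, rf_sq g3 h4, one_mul]
    · simp; omega

lemma reflLenD_eq {σ : Perm ℤ} (hσ : σ ∈ DInfSet) : reflLenD σ = cd σ := by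
  obtain ⟨n, hn⟩ := exists_D hσ
  unfold reflLenD
  apply le_antisymm
  · apply Nat.sInf_le
    obtain ⟨l, hl, hp, hlen⟩ := exists_factor _ σ hn hσ rfl
    rw [← hlen]
    exact ⟨l.get, fun t => hl _ (List.get_mem _ _), by rw [List.ofFn_get, hp]⟩
  · apply le_csInf
    · obtain ⟨l, hl, hp, hlen⟩ := exists_factor _ σ hn hσ rfl
      exact ⟨_, l.get, fun t => hl _ (List.get_mem _ _), by rw [List.ofFn_get, hp]⟩
    · rintro k ⟨r, hr, hp⟩
      have := (cd_le_length (List.ofFn r) (by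
        intro s hs
        obtain ⟨t, rfl⟩ := List.mem_ofFn.1 hs
        exact hr t)).2
      rwa [hp, List.length_ofFn] at this

/-! ### positive definiteness -/

open ComplexConjugate

lemma gram_nonneg {k : ℕ} {ι : Type*} (T : Finset ι) (C : ℝ) (hC : 0 ≤ C) (u : Fin k → ι → ℂ)
    (z : Fin k → ℂ) (M : Fin k → Fin k → ℂ)
    (hM : ∀ i j, M i j = C * ∑ x ∈ T, u i x * conj (u j x)) :
    0 ≤ ∑ i, ∑ j, z i * conj (z j) * M i j := by
  have : ∑ i, ∑ j, z i * conj (z j) * M i j =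
      C * ∑ x ∈ T, (∑ i, z i * u i x) * conj (∑ i, z i * u i x) := by
    have h1 : ∀ x ∈ T, (∑ i, z i * u i x) * conj (∑ i, z i * u i x) =
        ∑ i, ∑ j, (z i * u i x) * conj (z j * u j x) := by
      intro x _
      rw [map_sum, Finset.sum_mul_sum]
    have h2 : ∑ x ∈ T, ∑ i, ∑ j, (z i * u i x) * conj (z j * u j x) =
        ∑ i, ∑ j, ∑ x ∈ T, (z i * u i x) * conj (z j * u j x) :=
      Finset.sum_comm.trans (Finset.sum_congr rfl fun i _ => Finset.sum_comm)
    rw [Finset.sum_congr rfl h1, h2, Finset.mul_sum]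
    refine Finset.sum_congr rfl fun i _ => ?_
    rw [Finset.mul_sum]
    refine Finset.sum_congr rfl fun j _ => ?_
    rw [hM, Finset.mul_sum, Finset.mul_sum, Finset.mul_sum]
    refine Finset.sum_congr rfl fun x _ => ?_
    rw [map_mul]
    ring
  rw [this]
  refine mul_nonneg (by exact_mod_cast hC) (Finset.sum_nonneg fun x _ => ?_)
  rw [Complex.mul_conj]
  exact_mod_cast Complex.normSq_nonneg _

lemma exists_common {k : ℕ} (g : Fin k → Perm ℤ) (hg : ∀ i, g i ∈ DInfSet) :
    ∃ n, ∀ i, g i ∈ Bn n := by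
  choose n hn using fun i => exists_D (hg i)
  exact ⟨Finset.univ.sup n, fun i => Bn_mono (Finset.le_sup (Finset.mem_univ i)) (hn i)⟩

lemma quot_D {σ τ : Perm ℤ} (hσ : σ ∈ DInfSet) (hτ : τ ∈ DInfSet) : τ⁻¹ * σ ∈ DInfSet :=
  DG.mul_mem (DG.inv_mem hτ) hσ

def PD (q : ℂ) : Prop := IsPosDefOn DInfSet (fun σ => q ^ reflLenD σ)

lemma PD_iff (q : ℂ) : PD q ↔ IsPosDefOn DInfSet (fun σ => q ^ cd σ) := by
  unfold PD IsPosDefOn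
  refine forall_congr' fun k => forall_congr' fun g => forall_congr' fun hg =>
    forall_congr' fun z => ?_
  simp only [fun i j => reflLenD_eq (quot_D (hg i) (hg j))]

lemma PD_neg {q : ℂ} (h : PD q) : PD (-q) := by
  rw [PD_iff] at *
  intro k g hg z
  obtain ⟨n, hn⟩ := exists_common g hg
  have := h k g hg (fun i => z i * (-1) ^ cd (g i))
  convert this using 1
  refine Finset.sum_congr rfl fun i _ => Finset.sum_congr rfl fun j _ => ?_
  simp only [map_mul, map_pow, map_neg, map_one]
  rw [neg_pow q, cd_parity (inv_mem (hn j)) (hn i), cd_inv (hn j)]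
  ring

lemma PD_zero : PD 0 := by
  classical
  rw [PD_iff]
  intro k g hg z
  obtain ⟨n, hn⟩ := exists_common g hg
  refine gram_nonneg (Finset.univ.image g) 1 zero_le_one (fun i x => if g i = x then 1 else 0) z
    (fun i j => 0 ^ cd ((g j)⁻¹ * g i)) ?_
  intro i j
  have : ∀ x, (if g i = x then (1 : ℂ) else 0) * conj (if g j = x then (1 : ℂ) else 0) =
      if g i = x then (if g j = x then 1 else 0) else 0 := by
    intro x; split_ifs <;> simp
  simp only [this]
  rw [Finset.sum_ite_eq, if_pos (by simp), zero_pow_eq]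
  simp only [cd_eq_zero (mul_mem (inv_mem (hn j)) (hn i)), inv_mul_eq_one]
  simp

lemma PD_inv {m : ℕ} (hm : Odd m) : PD (1 / (m : ℂ)) := by
  classical
  rw [PD_iff]
  intro k g hg z
  obtain ⟨n, hn⟩ := exists_common g hg
  have : NeZero m := ⟨by rintro rfl; simp at hm⟩
  have hfin : ((Fx n m 1 : AddSubgroup (ℤ → ZMod m)) : Set (ℤ → ZMod m)).Finite :=
    Fx_finite n m 1
  set T := hfin.toFinset with hT
  have memT : ∀ f, f ∈ T ↔ f ∈ Fx n m 1 := by intro f; simp [hT]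
  refine gram_nonneg (T ×ˢ T) (1 / (Nat.card (Fx n m 1))) (by positivity)
    (fun i x => if x.1 ∘ ⇑(g i)⁻¹ = x.2 then 1 else 0) z
    (fun i j => (1 / (m : ℂ)) ^ cd ((g j)⁻¹ * g i)) ?_
  intro i j
  have hs : (∑ x ∈ T ×ˢ T, (if x.1 ∘ ⇑(g i)⁻¹ = x.2 then (1 : ℂ) else 0) *
      conj (if x.1 ∘ ⇑(g j)⁻¹ = x.2 then (1 : ℂ) else 0)) = Nat.card (Fx n m ((g j)⁻¹ * g i)) := by
    rw [Finset.sum_product]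
    have h1 : ∀ f ∈ T, ∑ f' ∈ T, (if f ∘ ⇑(g i)⁻¹ = f' then (1 : ℂ) else 0) *
      conj (if f ∘ ⇑(g j)⁻¹ = f' then (1 : ℂ) else 0) =
        if f ∘ ⇑(g j)⁻¹ = f ∘ ⇑(g i)⁻¹ then 1 else 0 := by
      intro f hf
      have : ∀ x, (if f ∘ ⇑(g i)⁻¹ = x then (1 : ℂ) else 0) *
          conj (if f ∘ ⇑(g j)⁻¹ = x then (1 : ℂ) else 0) =
          if f ∘ ⇑(g i)⁻¹ = x then (if f ∘ ⇑(g j)⁻¹ = x then 1 else 0) else 0 := by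
        intro x; split_ifs <;> simp
      simp only [this]
      rw [Finset.sum_ite_eq, if_pos]
      rw [memT] at hf ⊢
      obtain ⟨a, b, -⟩ := hf
      have hg' := inv_mem (hn i)
      exact ⟨fun x => by simp only [Function.comp_apply, hg'.1, a],
        fun x hx => by simp only [Function.comp_apply, hg'.2 x hx, b x hx], fun x => rfl⟩
    rw [Finset.sum_congr rfl h1, Finset.sum_boole]
    congr 1
    have : Nat.card (Fx n m ((g j)⁻¹ * g i)) =
      ((Fx n m ((g j)⁻¹ * g i) : AddSubgroup (ℤ → ZMod m)) : Set (ℤ → ZMod m)).ncard := rfl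
    rw [this, ← Set.ncard_coe_finset]
    congr 1
    ext f
    simp only [Finset.coe_filter, memT, Set.mem_ofPred_eq, SetLike.mem_coe, mem_Fx]
    constructor
    · rintro ⟨⟨a, b, -⟩, c⟩
      refine ⟨a, b, fun x => ?_⟩
      have := congrFun c (g i x)
      simpa using this
    · rintro ⟨a, b, c⟩
      refine ⟨⟨a, b, fun x => rfl⟩, ?_⟩
      funext x
      have := c ((g i)⁻¹ x)
      simpa using this
  rw [hs]
  have := cd_spec (mul_mem (inv_mem (hn j)) (hn i)) hm
  have hp := Fx_pos n m 1
  have hm0 : (m : ℂ) ≠ 0 := NeZero.ne _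
  have hp' : (Nat.card (Fx n m 1) : ℂ) ≠ 0 := by exact_mod_cast hp.ne'
  push_cast
  rw [← this] at hp' ⊢
  push_cast at hp' ⊢
  have := right_ne_zero_of_mul hp'
  rw [one_div, inv_pow]
  field_simp

lemma PD_of_odd {N : ℤ} : PD (1 / (2 * (N : ℂ) + 1)) := by
  rcases le_or_gt 0 N with h | h
  · obtain ⟨k, rfl⟩ := Int.eq_ofNat_of_zero_le h
    have := PD_inv (m := 2 * k + 1) ⟨k, rfl⟩
    convert this using 2
    push_cast; rfl
  · obtain ⟨k, hk⟩ := Int.eq_ofNat_of_zero_le (show 0 ≤ -N - 1 by omega)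
    have hN : N = -(k : ℤ) - 1 := by omega
    have := PD_neg (PD_inv (m := 2 * k + 1) ⟨k, rfl⟩)
    convert this using 1
    rw [hN, ← div_neg]
    congr 1
    push_cast; ring

/-! ### characters -/

lemma char_iff (q : ℂ) : reflFunD q ∈ CharSetD ↔ PD q := by
  have key : IsPosDefOn DInfSet (reflFunD q) ↔ PD q := by
    unfold PD IsPosDefOn
    refine forall_congr' fun k => forall_congr' fun g => forall_congr' fun hg =>
      forall_congr' fun z => ?_
    simp [reflFunD, fun i j => quot_D (hg i) (hg j)]
  rw [← key]
  refine ⟨fun h => h.2.2.1, fun h => ⟨fun σ hσ => if_neg hσ, ?_, h, ?_⟩⟩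
  · intro g hg h hh
    have hD : h * g * h⁻¹ ∈ DInfSet := DG.mul_mem (DG.mul_mem hh hg) (DG.inv_mem hh)
    obtain ⟨n, hn⟩ := exists_D hg
    obtain ⟨n', hn'⟩ := exists_D hh
    rw [reflFunD, reflFunD, if_pos hD, if_pos hg, reflLenD_eq hD, reflLenD_eq hg,
      cd_conj (Bn_mono (le_max_left n n') hn) (Bn_mono (le_max_right n n') hn')]
  · have h1 : (1 : Perm ℤ) ∈ DInfSet := DG.one_mem
    rw [reflFunD, if_pos h1, reflLenD_eq h1, cd_one, pow_zero]

lemma reflFunD_eq {q : ℂ} {σ : Perm ℤ} (h : σ ∈ DInfSet) : reflFunD q σ = q ^ cd σ := by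
  rw [reflFunD, if_pos h, reflLenD_eq h]

lemma pd_herm {f : Perm ℤ → ℂ} (hf : IsPosDefOn DInfSet f) (h1 : f 1 = 1) {g : Perm ℤ}
    (hg : g ∈ DInfSet) : f g⁻¹ = conj (f g) := by
  have hD : ∀ i, (![1, g] : Fin 2 → Perm ℤ) i ∈ DInfSet := by
    intro i; fin_cases i
    · exact DG.one_mem
    · exact hg
  have e1 := hf 2 ![1, g] hD ![1, 1]
  have e2 := hf 2 ![1, g] hD ![1, Complex.I]
  simp [Fin.sum_univ_two, h1, Complex.le_def] at e1 e2
  apply Complex.ext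
  · simp; linarith [e2.2]
  · simp; linarith [e1.2]

lemma char_cs {f : Perm ℤ → ℂ} (hf : f ∈ CharSetD) {σ : Perm ℤ} (hσ : σ ∈ DInfSet) (K : ℕ)
    (h : Fin K → Perm ℤ) (hh : ∀ t, h t ∈ DInfSet) :
    (K : ℝ) ^ 2 * Complex.normSq (f σ) ≤
      (∑ t, ∑ s, f ((h s * σ * (h s)⁻¹)⁻¹ * (h t * σ * (h t)⁻¹))).re := by
  obtain ⟨-, hc, hp, h1⟩ := hf
  have hτ : ∀ t, h t * σ * (h t)⁻¹ ∈ DInfSet := fun t =>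
    DG.mul_mem (DG.mul_mem (hh t) hσ) (DG.inv_mem (hh t))
  have hfτ : ∀ t, f (h t * σ * (h t)⁻¹) = f σ := fun t => hc σ hσ _ (hh t)
  have hfτ' : ∀ t, f (h t * σ * (h t)⁻¹)⁻¹ = conj (f σ) := fun t => by
    rw [pd_herm hp h1 (hτ t), hfτ]
  generalize hτe : (fun t => h t * σ * (h t)⁻¹) = τ at *
  have hτe' : ∀ t, h t * σ * (h t)⁻¹ = τ t := fun t => congrFun hτe t
  simp only [hτe'] at *
  have := hp (K + 1) (Fin.cons 1 τ) (fun i => by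
    refine Fin.cases ?_ ?_ i
    · exact DG.one_mem
    · intro t; exact hτ t) (Fin.cons (-(K * f σ)) (fun _ => 1))
  simp only [Fin.sum_univ_succ, Fin.cons_zero, Fin.cons_succ, inv_one, one_mul, mul_one, h1, hfτ,
    hfτ', map_one, map_neg, map_mul, Complex.conj_natCast, Finset.sum_const, Finset.card_univ,
    Fintype.card_fin, nsmul_eq_mul, Finset.sum_add_distrib] at this
  have e : -(↑K * f σ) * -(↑K * conj (f σ)) + ↑K * (-(↑K * conj (f σ)) * f σ) +
      (↑K * (-(↑K * f σ) * conj (f σ)) + ∑ x, ∑ x_1, f ((τ x_1)⁻¹ * τ x)) =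
      ∑ x, ∑ x_1, f ((τ x_1)⁻¹ * τ x) - ((K : ℝ) ^ 2 * Complex.normSq (f σ) : ℝ) := by
    push_cast
    rw [← Complex.mul_conj]
    ring
  rw [e] at this
  have := (Complex.le_def.1 this).1
  rw [Complex.sub_re, Complex.ofReal_re, Complex.zero_re] at this
  linarith

/-- block shift -/
def shf (n d : ℤ) (x : ℤ) : ℤ :=
  if 1 ≤ x ∧ x ≤ n then x + d else if d + 1 ≤ x ∧ x ≤ d + n then x - d
  else if -n ≤ x ∧ x ≤ -1 then x - d else if -(d + n) ≤ x ∧ x ≤ -(d + 1) then x + d else x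

lemma shf_inv {n d : ℤ} (hn : 0 ≤ n) (h : n ≤ d) : Function.Involutive (shf n d) := by
  intro x
  unfold shf
  split_ifs <;> omega

def sh (n d : ℤ) (hn : 0 ≤ n) (h : n ≤ d) : Perm ℤ := (shf_inv hn h).toPerm

lemma sh_apply {n d : ℤ} (hn : 0 ≤ n) (h : n ≤ d) (x : ℤ) : sh n d hn h x = shf n d x := rfl

lemma sh_mem {n d : ℤ} (hn : 0 ≤ n) (h : n ≤ d) : sh n d hn h ∈ DInfSet := by
  refine ⟨mem_BInf_iff.2 ⟨(n + d).toNat, fun x => ?_, fun x hx => ?_⟩, ?_⟩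
  · rw [sh_apply, sh_apply]; unfold shf
    split_ifs <;> omega
  · rw [sh_apply]; unfold shf
    rcases abs_cases x with h | h <;>
    split_ifs <;> omega
  · have : {i : ℤ | 0 < i ∧ sh n d hn h i < 0} = ∅ := by
      ext i
      simp only [Set.mem_ofPred_eq, sh_apply, Set.mem_empty_iff_false, iff_false]
      unfold shf
      split_ifs <;> omega
    rw [this]; simp

lemma sh_conj_supp {n : ℕ} {d : ℤ} (h : (n : ℤ) ≤ d) {σ : Perm ℤ} (hσ : σ ∈ Bn n) {x : ℤ}
    (hx : (sh n d (by omega) h * σ * (sh n d (by omega) h)⁻¹) x ≠ x) : d < |x| ∧ |x| ≤ d + n := by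
  obtain ⟨y, rfl⟩ := (sh n d (by omega) h).surjective x
  simp only [Perm.mul_apply, Perm.coe_inv, Equiv.symm_apply_apply] at hx
  have hy : σ y ≠ y := fun h' => hx (by rw [h'])
  obtain ⟨a, -, b, -⟩ := Bn_moved hσ hy
  rw [sh_apply]
  unfold shf
  rcases abs_cases y with h' | h' <;>
  split_ifs <;> first | omega | skip
  · rw [abs_of_pos (by omega)]; omega
  · rw [abs_of_neg (by omega)]; omega

lemma extreme {q : ℂ} (hq : conj q = q) (hchar : reflFunD q ∈ CharSetD) :
    reflFunD q ∈ Set.extremePoints ℝ CharSetD := by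
  refine ⟨hchar, ?_⟩
  rintro f hf f₂ hf₂ ⟨a, b, ha, hb, hab, hφ⟩
  funext σ
  by_cases hσ : σ ∈ DInfSet
  swap
  · rw [hf.1 σ hσ, hchar.1 σ hσ]
  obtain ⟨n, hn⟩ := exists_D hσ
  have hval : ∀ τ, reflFunD q τ = a * f τ + b * f₂ τ := by
    intro τ; rw [← hφ]; simp
  set p : ℝ := q.re ^ cd σ with hp
  have hqre : q = (q.re : ℂ) := (Complex.conj_eq_iff_re.1 hq).symm
  have hpσ : reflFunD q σ = p := by
    rw [reflFunD_eq hσ, hp]; push_cast; rw [← hqre]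
  have hd : ∀ t : ℕ, (n : ℤ) ≤ (t + 1) * n := fun t => by nlinarith [Int.natCast_nonneg n, Int.natCast_nonneg t]
  let hs : ∀ t : ℕ, Perm ℤ := fun t => sh n ((t + 1) * n) (by omega) (hd t)
  have hsD : ∀ t, hs t ∈ DInfSet := fun t => sh_mem _ _
  have hterm : ∀ s t : ℕ, reflFunD q ((hs s * σ * (hs s)⁻¹)⁻¹ * (hs t * σ * (hs t)⁻¹)) =
      if s = t then 1 else ((p ^ 2 : ℝ) : ℂ) := by
    intro s t
    have hτ : ∀ t, hs t * σ * (hs t)⁻¹ ∈ DInfSet := fun t =>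
      DG.mul_mem (DG.mul_mem (hsD t) hσ) (DG.inv_mem (hsD t))
    split_ifs with hst
    · subst hst; rw [inv_mul_cancel]; exact hchar.2.2.2
    · rw [reflFunD_eq (quot_D (hτ t) (hτ s))]
      obtain ⟨n1, h1⟩ := exists_D (hsD s)
      obtain ⟨n2, h2⟩ := exists_D (hsD t)
      have k1 : hs s ∈ Bn (n + n1 + n2) := Bn_mono (by omega) h1
      have k2 : hs t ∈ Bn (n + n1 + n2) := Bn_mono (by omega) h2
      have k3 : σ ∈ Bn (n + n1 + n2) := Bn_mono (by omega) hn
      have k4 := mul_mem (mul_mem k1 k3) (inv_mem k1)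
      have k5 := mul_mem (mul_mem k2 k3) (inv_mem k2)
      rw [cd_disjoint (inv_mem k4) k5, cd_inv k4, cd_conj k3 k1, cd_conj k3 k2, pow_add, hp, hqre]
      · push_cast
        simp only [Complex.ofReal_re]
        ring
      · intro x hx
        have hx' : (hs s * σ * (hs s)⁻¹) x ≠ x := by
          intro h'; apply hx; rw [Perm.inv_eq_iff_eq, h']
        by_contra hx2
        have r1 := sh_conj_supp (hd s) hn hx'
        have r2 := sh_conj_supp (hd t) hn hx2
        rcases Nat.lt_or_gt_of_ne hst with hlt | hlt
        · have : ((s : ℤ) + 1) ≤ t := by exact_mod_cast hlt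
          nlinarith [Int.natCast_nonneg n]
        · have : ((t : ℤ) + 1) ≤ s := by exact_mod_cast hlt
          nlinarith [Int.natCast_nonneg n]
  have hA : ∀ K : ℕ, (K : ℝ) ^ 2 * (a * Complex.normSq (f σ) + b * Complex.normSq (f₂ σ)) ≤
      K + ((K : ℝ) ^ 2 - K) * p ^ 2 := by
    intro K
    have c1 := char_cs hf hσ K (fun t => hs t) (fun t => hsD t)
    have c2 := char_cs hf₂ hσ K (fun t => hs t) (fun t => hsD t)
    have c3 : ∑ t : Fin K, ∑ s : Fin K, reflFunD q ((hs s * σ * (hs s)⁻¹)⁻¹ * (hs t * σ * (hs t)⁻¹)) =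
        ((K + ((K : ℝ) ^ 2 - K) * p ^ 2 : ℝ) : ℂ) := by
      simp only [hterm]
      have : ∀ t s : Fin K, (if (s : ℕ) = t then (1 : ℂ) else ((p ^ 2 : ℝ) : ℂ)) =
          (if s = t then (1 - ((p ^ 2 : ℝ) : ℂ)) else 0) + ((p ^ 2 : ℝ) : ℂ) := by
        intro t s
        simp only [Fin.ext_iff]
        split_ifs <;> simp
      simp only [this, Finset.sum_add_distrib]
      simp
      ring
    simp only [hval, Finset.sum_add_distrib, ← Finset.mul_sum] at c3
    have c4 := congrArg Complex.re c3
    rw [Complex.add_re, Complex.re_ofReal_mul, Complex.re_ofReal_mul, Complex.ofReal_re] at c4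
    nlinarith
  have hE : a * Complex.normSq (f σ) + b * Complex.normSq (f₂ σ) ≤ p ^ 2 := by
    by_contra hcon
    push Not at hcon
    obtain ⟨K, hK⟩ := exists_nat_gt (1 / (a * Complex.normSq (f σ) + b * Complex.normSq (f₂ σ) - p ^ 2))
    have hpos := sub_pos.2 hcon
    rw [div_lt_iff₀ hpos] at hK
    have := hA K
    have hK0 : (0 : ℝ) ≤ K := Nat.cast_nonneg K
    have hK1 : (0 : ℝ) < K := by
      rcases hK0.lt_or_eq with h | h
      · exact h
      · rw [← h] at hK; linarith
    nlinarith [sq_nonneg p, mul_lt_mul_of_pos_left hK hK1, mul_nonneg hK0 (sq_nonneg p)]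
  have hpv := hval σ
  rw [hpσ] at hpv
  have hre := congrArg Complex.re hpv
  have him := congrArg Complex.im hpv
  simp at hre him
  rw [Complex.normSq_apply, Complex.normSq_apply] at hE
  have hb' : b = 1 - a := by linarith
  subst hb'
  have hz : a * (1 - a) * (((f σ).re - (f₂ σ).re) ^ 2 + ((f σ).im - (f₂ σ).im) ^ 2) ≤ 0 := by
    have hi2 : (a * (f σ).im + (1 - a) * (f₂ σ).im) ^ 2 = 0 := by rw [← him]; simp
    rw [hre] at hE
    nlinarith
  have hab' := mul_pos ha hb
  have hz2 : ((f σ).re - (f₂ σ).re) ^ 2 + ((f σ).im - (f₂ σ).im) ^ 2 ≤ 0 := by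
    by_contra h'
    push Not at h'
    nlinarith [mul_pos hab' h']
  have z1 : (f σ).re = (f₂ σ).re := by nlinarith [sq_nonneg ((f σ).re - (f₂ σ).re), sq_nonneg ((f σ).im - (f₂ σ).im)]
  have z2 : (f σ).im = (f₂ σ).im := by nlinarith [sq_nonneg ((f σ).re - (f₂ σ).re), sq_nonneg ((f σ).im - (f₂ σ).im)]
  have : f σ = f₂ σ := Complex.ext z1 z2
  rw [hval, ← this]
  push_cast
  ring

/-! ### generating function -/

def Jn (n : ℕ) : Finset ℤ := (Finset.Icc (-(n : ℤ)) n).erase 0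

lemma mem_Jn {n : ℕ} {j : ℤ} : j ∈ Jn n ↔ j ≠ 0 ∧ |j| ≤ n := by
  simp [Jn, abs_le]

lemma card_Jn (n : ℕ) : (Jn n).card = 2 * n := by
  unfold Jn
  rw [Finset.card_erase_of_mem (by simp), Int.card_Icc]
  omega

lemma Jn_succ (n : ℕ) : Jn (n + 1) = insert ((n : ℤ) + 1) (insert (-((n : ℤ) + 1)) (Jn n)) := by
  ext j
  simp only [Finset.mem_insert, mem_Jn]
  rcases abs_cases j with h | h <;> push_cast <;> omega

open Classical in
def BL : ℕ → Finset (Perm ℤ)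
  | 0 => {1}
  | n + 1 => (Jn (n + 1) ×ˢ BL n).image (fun p => rf ((n : ℤ) + 1) p.1 * p.2)

lemma mem_BL (n : ℕ) : ∀ σ, σ ∈ BL n ↔ σ ∈ Bn n := by
  classical
  induction n with
  | zero =>
    intro σ
    rw [BL, Finset.mem_singleton]
    constructor
    · rintro rfl; exact one_mem _
    · intro h
      ext x
      by_cases hx : x = 0
      · subst hx; simp [Bn_zero h]
      · rw [h.2 x (by simpa using hx)]; rfl
  | succ n ih =>
    intro σ
    have hn0 : (n : ℤ) + 1 ≠ 0 := by omega
    have hab : |(n : ℤ) + 1| ≤ (n + 1 : ℕ) := by rw [abs_of_pos (by omega)]; simp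
    simp only [BL]
    rw [Finset.mem_image]
    constructor
    · rintro ⟨⟨j, g⟩, hp, rfl⟩
      rw [Finset.mem_product, mem_Jn, ih] at hp
      exact mul_mem (rf_mem hn0 hp.1.1 hab hp.1.2) (Bn_mono (Nat.le_succ n) hp.2)
    · intro h
      have hj0 : σ ((n : ℤ) + 1) ≠ 0 := fun h' => by
        have := σ.injective (h'.trans (Bn_zero h).symm); omega
      have hj : σ ((n : ℤ) + 1) ∈ Jn (n + 1) := mem_Jn.2 ⟨hj0, Bn_abs_le h hab⟩
      have hm := mul_mem (rf_mem hn0 hj0 hab (mem_Jn.1 hj).2) h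
      refine ⟨(σ ((n : ℤ) + 1), rf ((n : ℤ) + 1) (σ ((n : ℤ) + 1)) * σ), ?_, ?_⟩
      · rw [Finset.mem_product, ih]
        refine ⟨hj, hm.1, fun i hi => ?_⟩
        have hfix : (rf ((n : ℤ) + 1) (σ ((n : ℤ) + 1)) * σ) ((n : ℤ) + 1) = (n : ℤ) + 1 := by
          rw [Perm.mul_apply, rf_apply hn0 hj0]
          split_ifs <;> omega
        by_cases hi' : ((n + 1 : ℕ) : ℤ) < |i|
        · exact hm.2 i hi'
        · have : |i| = (n : ℤ) + 1 := by push_cast at hi'; omega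
          rcases abs_eq (by omega) |>.1 this with rfl | rfl
          · exact hfix
          · rw [hm.1, hfix]
      · simp only
        rw [← mul_assoc, rf_sq hn0 hj0, one_mul]

lemma BL_sum (w : Perm ℤ → ℝ) (a b : ℝ)
    (ha : ∀ n : ℕ, ∀ g ∈ Bn n, w (rf ((n : ℤ) + 1) (-((n : ℤ) + 1)) * g) = a * w g)
    (hb : ∀ n : ℕ, ∀ g ∈ Bn n, ∀ j ∈ Jn n, w (rf ((n : ℤ) + 1) j * g) = b * w g) (n : ℕ) :
    ∑ g ∈ BL (n + 1), w g = (1 + a + 2 * n * b) * ∑ g ∈ BL n, w g := by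
  classical
  have hn0 : (n : ℤ) + 1 ≠ 0 := by omega
  simp only [BL]
  rw [Finset.sum_image, Finset.sum_product, Jn_succ, Finset.sum_insert, Finset.sum_insert]
  · simp only [rf_self, one_mul]
    rw [Finset.sum_congr rfl (fun g hg => ha n g ((mem_BL n g).1 hg)), ← Finset.mul_sum]
    rw [Finset.sum_congr rfl (fun j hj => Finset.sum_congr rfl
      (fun g hg => hb n g ((mem_BL n g).1 hg) j hj))]
    simp only [← Finset.mul_sum, Finset.sum_const, card_Jn, nsmul_eq_mul]
    push_cast
    ring
  · rw [mem_Jn, abs_neg, abs_of_pos (by omega)]; omega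
  · rw [Finset.mem_insert, mem_Jn, abs_of_pos (by omega)]; omega
  · have key : ∀ p ∈ (Jn (n + 1) ×ˢ BL n : Finset (ℤ × Perm ℤ)),
        (rf ((n : ℤ) + 1) p.1 * p.2) ((n : ℤ) + 1) = p.1 := by
      intro p hp
      rw [Finset.mem_product, mem_Jn, mem_BL] at hp
      rw [Perm.mul_apply, hp.2.2 _ (by rw [abs_of_pos (by omega)]; omega), rf_apply hn0 hp.1.1]
      simp
    rintro ⟨j, g⟩ hp ⟨j', g'⟩ hp' h
    have h1 := key _ hp
    have h2 := key _ hp'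
    simp only at h h1 h2
    rw [h, h2] at h1
    subst h1
    rw [mul_left_cancel h]

lemma step_facts {n : ℕ} {g : Perm ℤ} (hg : g ∈ Bn n) {j : ℤ} (hj0 : j ≠ 0) (hj : |j| ≤ n + 1)
    (hne : j ≠ n + 1) : cd (rf ((n : ℤ) + 1) j * g) = cd g + 1 := by
  have hn0 : (n : ℤ) + 1 ≠ 0 := by omega
  have hab : |(n : ℤ) + 1| ≤ (n + 1 : ℕ) := by rw [abs_of_pos (by omega)]; simp
  have hm := mul_mem (rf_mem hn0 hj0 hab (by push_cast; exact hj)) (Bn_mono (Nat.le_succ n) hg)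
  have e : (rf ((n : ℤ) + 1) j * g) ((n : ℤ) + 1) = j := by
    rw [Perm.mul_apply, hg.2 _ (by rw [abs_of_pos (by omega)]; omega), rf_apply hn0 hj0]
    simp
  have := cd_step hm (i := (n : ℤ) + 1) (by rw [e]; exact hne)
  rwa [e, ← mul_assoc, rf_sq hn0 hj0, one_mul] at this

open Classical in
def chiD (σ : Perm ℤ) : ℝ := if σ ∈ DInfSet then 1 else -1

lemma chiD_eq {n : ℕ} {σ : Perm ℤ} (hσ : σ ∈ Bn n) : chiD σ = chi n σ := by
  unfold chiD
  rw [mem_D_iff hσ]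
  split_ifs with h
  · simp [h]
  · have := chi_eq_pow hσ
    rcases neg_one_pow_eq_or ℤ ({i : ℤ | 0 < i ∧ σ i < 0}.ncard) with h' | h'
    · rw [h'] at this; exact absurd this h
    · rw [h'] at this; simp [this]

lemma sum_plus (t : ℝ) (n : ℕ) :
    ∑ g ∈ BL n, t ^ cd g = ∏ i ∈ Finset.range n, (1 + (2 * i + 1) * t) := by
  induction n with
  | zero => simp [BL, cd_one]
  | succ n ih =>
    rw [BL_sum _ t t, ih, Finset.prod_range_succ]
    · ring
    · intro n g hg
      rw [step_facts hg (by omega) (by rw [abs_neg, abs_of_pos (by omega)]) (by omega)]; ring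
    · intro n g hg j hj
      rw [mem_Jn] at hj
      rw [step_facts hg hj.1 (by omega) (by rintro rfl; rw [abs_of_pos (by omega)] at hj; omega)]
      ring

lemma sum_minus (t : ℝ) (n : ℕ) :
    ∑ g ∈ BL n, chiD g * t ^ cd g = ∏ i ∈ Finset.range n, (1 + (2 * i - 1) * t) := by
  have habs : ∀ n : ℕ, |(n : ℤ) + 1| ≤ (n + 1 : ℕ) := by
    intro n; rw [abs_of_pos (by omega)]; simp
  induction n with
  | zero => simp [BL, cd_one, chiD_eq (one_mem (Bn 0)), chi_one]
  | succ n ih =>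
    rw [BL_sum _ (-t) t, ih, Finset.prod_range_succ]
    · ring
    · intro n g hg
      have hn0 : (n : ℤ) + 1 ≠ 0 := by omega
      have hn0' : -((n : ℤ) + 1) ≠ 0 := by omega
      have hg' := Bn_mono (Nat.le_succ n) hg
      have hr := rf_mem hn0 hn0' (habs n) (by rw [abs_neg]; exact habs n)
      rw [step_facts hg (by omega) (by rw [abs_neg, abs_of_pos (by omega)]) (by omega),
        chiD_eq (mul_mem hr hg'), chi_mul hr hg', chiD_eq hg', chi_short hn0 (habs n)]
      push_cast
      ring
    · intro n g hg j hj
      rw [mem_Jn] at hj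
      have hn0 : (n : ℤ) + 1 ≠ 0 := by omega
      have hg' := Bn_mono (Nat.le_succ n) hg
      have hj' : |j| ≤ (n + 1 : ℕ) := by push_cast; omega
      have hr := rf_mem hn0 hj.1 (habs n) hj'
      rw [step_facts hg hj.1 (by omega) (by rintro rfl; rw [abs_of_pos (by omega)] at hj; omega),
        chiD_eq (mul_mem hr hg'), chi_mul hr hg', chiD_eq hg',
        chi_long hn0 hj.1 (habs n) hj' (by rw [abs_of_pos (by omega)]; omega)]
      push_cast
      ring

open Classical in
lemma sum_D (t : ℝ) (n : ℕ) :
    ∑ g ∈ (BL (n + 1)).filter (· ∈ DInfSet), t ^ cd g =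
      (∏ i ∈ Finset.range n, (1 + (2 * i + 1) * t)) * (1 + n * t) := by
  have h1 := sum_plus t (n + 1)
  have h2 := sum_minus t (n + 1)
  have h3 : ∑ g ∈ (BL (n + 1)).filter (· ∈ DInfSet), t ^ cd g =
      ∑ g ∈ BL (n + 1), (t ^ cd g + chiD g * t ^ cd g) / 2 := by
    rw [Finset.sum_filter]
    refine Finset.sum_congr rfl fun g _ => ?_
    unfold chiD
    split_ifs <;> ring
  rw [h3, ← Finset.sum_div, Finset.sum_add_distrib, h1, h2, Finset.prod_range_succ,
    Finset.prod_range_succ']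
  have : ∏ k ∈ Finset.range n, (1 + (2 * ((k + 1 : ℕ) : ℝ) - 1) * t) =
      ∏ i ∈ Finset.range n, (1 + (2 * i + 1) * t) := by
    refine Finset.prod_congr rfl fun i _ => ?_
    push_cast; ring
  rw [this]
  push_cast
  ring

lemma PD_sum {f : Perm ℤ → ℂ} (hf : IsPosDefOn DInfSet f) (T : Finset (Perm ℤ))
    (hT : ∀ g ∈ T, g ∈ DInfSet) : 0 ≤ ∑ x ∈ T, ∑ y ∈ T, f (y⁻¹ * x) := by
  have := hf T.card (fun i => (T.equivFin.symm i).1) (fun i => hT _ (T.equivFin.symm i).2)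
    (fun _ => 1)
  simp only [map_one, one_mul] at this
  rw [Equiv.sum_comp T.equivFin.symm
    (fun x : T => ∑ j, f (((T.equivFin.symm j).1)⁻¹ * x.1))] at this
  simp only [fun x : T => Equiv.sum_comp T.equivFin.symm (fun y : T => f (y.1⁻¹ * x.1))] at this
  rw [Finset.sum_coe_sort T (fun x => ∑ y : T, f (y.1⁻¹ * x))] at this
  simp only [fun x => Finset.sum_coe_sort T (fun y => f (y⁻¹ * x))] at this
  exact this

lemma PD_poly {t : ℝ} (h : PD (t : ℂ)) (n : ℕ) :
    0 ≤ (∏ i ∈ Finset.range n, (1 + (2 * (i : ℝ) + 1) * t)) * (1 + n * t) := by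
  classical
  rw [PD_iff] at h
  set T := (BL (n + 1)).filter (· ∈ DInfSet) with hTdef
  have memT : ∀ g, g ∈ T ↔ g ∈ Bn (n + 1) ⊓ DG := by
    intro g
    rw [hTdef, Finset.mem_filter, mem_BL, Subgroup.mem_inf, mem_DG]
  have h0 := PD_sum h T (fun g hg => ((memT g).1 hg).2)
  have h1 : ∑ x ∈ T, ∑ y ∈ T, (t : ℂ) ^ cd (y⁻¹ * x) = ((T.card * ∑ g ∈ T, t ^ cd g : ℝ) : ℂ) := by
    rw [Finset.sum_comm]
    have : ∀ y ∈ T, ∑ x ∈ T, (t : ℂ) ^ cd (y⁻¹ * x) = ∑ g ∈ T, (t : ℂ) ^ cd g := by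
      intro y hy
      rw [memT] at hy
      refine Finset.sum_bij' (fun x _ => y⁻¹ * x) (fun x _ => y * x) ?_ ?_ ?_ ?_ ?_
      · intro x hx; rw [memT] at *; exact mul_mem (inv_mem hy) hx
      · intro x hx; rw [memT] at *; exact mul_mem hy hx
      · intro x _; simp
      · intro x _; simp
      · intro x _; rfl
    rw [Finset.sum_congr rfl this]
    simp
  rw [h1] at h0
  have h2 : 0 ≤ (T.card : ℝ) * ∑ g ∈ T, t ^ cd g := by exact_mod_cast h0
  have hpos : 0 < (T.card : ℝ) := by
    have : (1 : Perm ℤ) ∈ T := (memT 1).2 (one_mem _)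
    exact_mod_cast Finset.card_pos.2 ⟨1, this⟩
  have h3 := nonneg_of_mul_nonneg_right h2 hpos
  rwa [sum_D] at h3

lemma PD_neg_case {t : ℝ} (ht : t < 0) (h : PD (t : ℂ)) : ∃ i : ℕ, (2 * (i : ℝ) + 1) * t = -1 := by
  by_contra hcon
  push Not at hcon
  have hne : ∀ n, (∏ i ∈ Finset.range n, (1 + (2 * (i : ℝ) + 1) * t)) ≠ 0 := by
    intro n
    rw [Finset.prod_ne_zero_iff]
    intro i _ h0
    exact hcon i (by linarith)
  obtain ⟨n, hn⟩ := exists_nat_gt (1 / (-t))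
  rw [div_lt_iff₀ (by linarith)] at hn
  have hn0 : (0 : ℝ) ≤ n := Nat.cast_nonneg n
  have e1 := PD_poly h n
  have e2 := PD_poly h (n + 1)
  rw [Finset.prod_range_succ] at e2
  push_cast at e2
  have a1 : 1 + n * t < 0 := by linarith
  have a2 : 1 + (2 * (n : ℝ) + 1) * t < 0 := by nlinarith
  have a3 : 1 + ((n : ℝ) + 1) * t < 0 := by nlinarith
  have b1 := nonpos_of_mul_nonneg_left e1 a1
  have b2 := nonpos_of_mul_nonneg_left e2 a3
  have b3 := lt_of_le_of_ne b1 (hne n)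
  have b4 := mul_pos_of_neg_of_neg b3 a2
  linarith

lemma PD_real {q : ℂ} (h : PD q) : conj q = q := by
  have hr : rf 1 2 ∈ DInfSet := long_mem_D (by norm_num) (by norm_num) (by norm_num)
  have hr1 : rf 1 2 ∈ Bn 2 := rf_mem (by norm_num) (by norm_num) (by norm_num) (by norm_num)
  have hsq := rf_sq (i := 1) (j := 2) (by norm_num) (by norm_num)
  have e : (rf 1 2) 1 = 2 := by rw [rf_apply (by norm_num) (by norm_num)]; simp
  have hc : cd (rf 1 2) = 1 := by
    have := cd_step hr1 (i := 1) (by rw [e]; norm_num)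
    rw [e, hsq, cd_one] at this
    exact this
  have hinv : (rf 1 2)⁻¹ = rf 1 2 := inv_eq_of_mul_eq_one_left hsq
  rw [PD_iff] at h
  have := pd_herm h (by simp [cd_one]) hr
  simp only [hinv, hc, pow_one] at this
  exact this.symm

lemma PD_imp {q : ℂ} (h : PD q) : q = 0 ∨ ∃ N : ℤ, q = 1 / (2 * (N : ℂ) + 1) := by
  have hq : q = (q.re : ℂ) := (Complex.conj_eq_iff_re.1 (PD_real h)).symm
  rcases lt_trichotomy q.re 0 with h0 | h0 | h0
  · right
    rw [hq] at h
    obtain ⟨i, hi⟩ := PD_neg_case h0 h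
    refine ⟨-(i : ℤ) - 1, ?_⟩
    have hi' : (2 * (i : ℂ) + 1) * q = -1 := by rw [hq]; exact_mod_cast hi
    have hne : (2 * ((-(i : ℤ) - 1 : ℤ) : ℂ) + 1) ≠ 0 := by
      intro h'
      have : (2 * (-(i : ℤ) - 1) + 1 : ℤ) = 0 := by exact_mod_cast h'
      omega
    rw [eq_div_iff hne]
    push_cast
    linear_combination -hi'
  · left; rw [hq, h0]; simp
  · right
    have h' := PD_neg h
    rw [hq, ← Complex.ofReal_neg] at h'
    obtain ⟨i, hi⟩ := PD_neg_case (by linarith) h'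
    refine ⟨i, ?_⟩
    have hi' : (2 * (i : ℂ) + 1) * (-q) = -1 := by rw [hq]; exact_mod_cast hi
    have hne : (2 * ((i : ℤ) : ℂ) + 1) ≠ 0 := by
      intro h'
      have : (2 * (i : ℤ) + 1 : ℤ) = 0 := by exact_mod_cast h'
      omega
    rw [eq_div_iff hne]
    push_cast
    linear_combination -hi'

end

/-- the reflection function of D(∞) is positive definite iff it is a
character iff it is an extreme character iff q = 0 or q = 1/(2N+1) for some N ∈ ℤ. -/
theorem reflection_function_typeD (q : ℂ) :
    List.TFAE
      [IsPosDefOn DInfSet (fun σ => q ^ reflLenD σ),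
       reflFunD q ∈ CharSetD,
       reflFunD q ∈ Set.extremePoints ℝ CharSetD,
       q = 0 ∨ ∃ N : ℤ, q = 1 / (2 * (N : ℂ) + 1)] := by

  tfae_have 1 → 2 := fun h => (char_iff q).2 h
  tfae_have 2 → 3 := fun h => extreme (PD_real ((char_iff q).1 h)) h
  tfae_have 3 → 2 := fun h => h.1
  tfae_have 2 → 4 := fun h => PD_imp ((char_iff q).1 h)
  tfae_have 4 → 1 := by
    rintro (rfl | ⟨N, rfl⟩)
    · exact PD_zero
    · exact PD_of_odd
  tfae_finish

end TypeD
end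
end
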